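/- arXiv:2507.06716 — 3 statements merged into one kernel-verified Lean document; each statement's English description precedes it below -/
import Mathlib

section
/- Let σ ∈ (0,1] and let α satisfy σ < α < min{3/2, 1+σ}. Then the weight W_{α,σ} is a critical Hardy-weight for (−Δ_ℕ)^σ if and only if α ≤ (3+2σ)/4; that is: Q^σ(f) ≥ Σ_{n≥1} W_{α,σ}(n) f(n)² holds for every finitely supported f : ℕ → ℝ and for every nonzero W̃ : ℕ → [0,∞) there exists a finitely supported f with Q^σ(f) < Σ_{n≥1}(W_{α,σ}(n)+W̃(n)) f(n)², precisely when α ≤ (3+2σ)/4. -/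
open Real Filter

/-- Generalized binomial coefficient via the Gamma function. -/
noncomputable def rbinom (a b : ℝ) : ℝ :=
  Real.Gamma (a + 1) / (Real.Gamma (b + 1) * Real.Gamma (a - b + 1))

/-- Kernel of the fractional Laplacian `(-Δ_ℕ)^σ` on the discrete half-line. -/
noncomputable def Kker (σ : ℝ) (m n : ℕ) : ℝ :=
  (-1 : ℝ) ^ (m + n) *
    (rbinom (2 * σ) (σ + m - n) - rbinom (2 * σ) (σ + m + n))

/-- Quadratic form of `(-Δ_ℕ)^σ` (used for finitely supported `f` with `f 0 = 0`). -/
noncomputable def Qform (σ : ℝ) (f : ℕ → ℝ) : ℝ :=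
  ∑' m : ℕ, ∑' n : ℕ, Kker σ m n * f m * f n

/-- The Hardy-weight `W_{α,σ}`. -/
noncomputable def Wweight (σ α : ℝ) (n : ℕ) : ℝ :=
  4 ^ σ * (Real.Gamma (3/2 - α + σ) * Real.Gamma α /
            (Real.Gamma (α - σ) * Real.Gamma (3/2 - α))) *
    (Real.Gamma (n + α - σ - 1) * Real.Gamma (n - α + 2) /
      (Real.Gamma (n - α + σ + 2) * Real.Gamma (n + α - 1)))

/-- The Riesz potential `I_α`. -/
noncomputable def Riesz (α : ℝ) (n : ℕ) : ℝ :=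
  (4 * n / (4 ^ α * Real.sqrt 2)) * Real.Gamma (3/2 - α) *
    Real.Gamma (n + α - 1) / (Real.Gamma α * Real.Gamma (n - α + 2))

/-!
On `[0, π]` let `ω t = 2 - 2 cos t`, the symbol of `-Δ`. The kernel of `(-Δ_ℕ)^σ` is the matrix of
multiplication by `ω ^ σ` in the basis `sin (n t)`, and the Riesz potential `I_α` is, up to a
constant, the sequence of sine coefficients of `ω ^ (-α) sin t`. Hence
`(-Δ_ℕ)^σ I_α = I_{α - σ} = W_{α,σ} I_α` with `I_α > 0`. The off-diagonal part of the kernel is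
nonpositive, so the ground state representation writes `Q^σ(I_α ψ) - ∑ W_{α,σ} (I_α ψ)²` as the
nonnegative energy `½ ∑ -K^σ_{m,n} I_α(m) I_α(n) (ψ m - ψ n)²`, and `W_{α,σ}` is a Hardy-weight.

For `α ≤ (3 + 2σ) / 4` the ground state `I_α(n) ~ c n ^ (2α - 2)` grows so slowly that
`ψ n = (n ^ (-ε) - 1/2)₊`, which tends to the constant `1/2`, has energy `O(ε)`. This leaves no room
for a larger weight. For `α > (3 + 2σ) / 4` the reflected parameter `3/2 + σ - α` gives a
Hardy-weight that is strictly larger at every point.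
-/

namespace FractionalLaplacian

open MeasureTheory Topology Asymptotics

section GammaQuotients

lemma Gamma_add_natCast_add_one {a : ℝ} (ha : 0 < a) (n : ℕ) :
    Gamma (a + n + 1) = (∏ j ∈ Finset.range (n + 1), (a + j)) * Gamma a := by
  induction n with
  | zero => simp [Gamma_add_one ha.ne']
  | succ n ih =>
    have hpos : a + (n + 1 : ℕ) ≠ 0 := by positivity
    rw [Finset.prod_range_succ, Gamma_add_one hpos, Nat.cast_succ, ← add_assoc, ih]
    ring

lemma Gamma_natCast_add_isEquivalent_of_pos {a : ℝ} (ha : 0 < a) :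
    (fun n : ℕ ↦ Gamma (n + a)) ~[atTop] fun n ↦ Gamma n * (n : ℝ) ^ a := by
  have hΓ := Gamma_pos_of_pos ha
  have hlim := ((GammaSeq_tendsto_Gamma a).div_const (Gamma a)).div
    (tendsto_natCast_div_add_atTop a) one_ne_zero
  rw [div_self hΓ.ne', div_one] at hlim
  refine (isEquivalent_of_tendsto_one (hlim.congr' ?_)).symm
  filter_upwards [eventually_ne_atTop 0] with n hn
  have hn' : (n : ℝ) ≠ 0 := Nat.cast_ne_zero.mpr hn
  have hshift : Gamma (a + n + 1) = (n + a) * Gamma (n + a) := by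
    rw [add_comm a, Gamma_add_one (by positivity)]
  have hprod := (Gamma_add_natCast_add_one ha n).symm.trans hshift
  have hfact : (n.factorial : ℝ) = n * Gamma n := by
    rw [← Gamma_nat_eq_factorial, Gamma_add_one hn']
  have hden : (∏ j ∈ Finset.range (n + 1), (a + j)) ≠ 0 :=
    Finset.prod_ne_zero_iff.mpr fun j _ ↦ by positivity
  have hΓn : Gamma (n + a) ≠ 0 := (Gamma_pos_of_pos (by positivity)).ne'
  simp only [Pi.div_apply, GammaSeq, hfact]
  field_simp
  linear_combination -hprod

lemma Gamma_natCast_add_isEquivalent (a : ℝ) :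
    (fun n : ℕ ↦ Gamma (n + a)) ~[atTop] fun n ↦ Gamma n * (n : ℝ) ^ a := by
  suffices ∀ (k : ℕ) (a : ℝ), 0 < a + k →
      (fun n : ℕ ↦ Gamma (n + a)) ~[atTop] fun n ↦ Gamma n * (n : ℝ) ^ a by
    obtain ⟨k, hk⟩ := exists_nat_gt (-a)
    exact this k a (by linarith)
  intro k
  induction k with
  | zero => exact fun a ha ↦ Gamma_natCast_add_isEquivalent_of_pos (by simpa using ha)
  | succ k ih =>
    intro a ha
    have hshift : (fun n : ℕ ↦ (n : ℝ) / (n + a)) ~[atTop] fun _ ↦ 1 :=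
      (isEquivalent_const_iff_tendsto one_ne_zero).mpr (tendsto_natCast_div_add_atTop a)
    have hev : ∀ᶠ n : ℕ in atTop, 0 < (n : ℝ) ∧ 0 < n + a := by
      filter_upwards [tendsto_natCast_atTop_atTop.eventually_gt_atTop (max 0 (-a))] with n hn
      exact ⟨(le_max_left _ _).trans_lt hn, by linarith [le_max_right 0 (-a)]⟩
    have hsucc := ((ih (a + 1) (by push_cast at ha; linarith)).mul hshift).div
      (IsEquivalent.refl (u := fun n : ℕ ↦ (n : ℝ)))
    refine (hsucc.congr_left ?_).congr_right ?_ <;> filter_upwards [hev] with n ⟨hn, hna⟩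
    · simp only [Pi.div_apply, Pi.mul_apply]
      rw [← add_assoc, Gamma_add_one hna.ne']
      field_simp
    · simp only [Pi.div_apply, Pi.mul_apply]
      rw [rpow_add_one hn.ne']
      field_simp

lemma Gamma_natCast_add_div_isEquivalent (a b : ℝ) :
    (fun n : ℕ ↦ Gamma (n + a) / Gamma (n + b)) ~[atTop] fun n ↦ (n : ℝ) ^ (a - b) := by
  refine ((Gamma_natCast_add_isEquivalent a).div
    (Gamma_natCast_add_isEquivalent b)).congr_right ?_
  filter_upwards [eventually_gt_atTop 0] with n hn
  have hn' : 0 < (n : ℝ) := Nat.cast_pos.mpr hn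
  have hΓ := (Gamma_pos_of_pos hn').ne'
  rw [Pi.div_apply, rpow_sub hn']
  field_simp

lemma eq_mul_Gamma_div_Gamma_of_recurrence {u : ℕ → ℝ} {a b : ℝ} {N : ℕ} (ha : 0 < N + a)
    (hb : 0 < N + b) (hu : ∀ n, N ≤ n → (n + b) * u (n + 1) = (n + a) * u n) {n : ℕ}
    (hn : N ≤ n) :
    u n = u N * (Gamma (N + b) / Gamma (N + a)) * (Gamma (n + a) / Gamma (n + b)) := by
  induction n, hn using Nat.le_induction with
  | base =>
    have := (Gamma_pos_of_pos ha).ne'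
    have := (Gamma_pos_of_pos hb).ne'
    field_simp
  | succ n hn ih =>
    have hNn : (N : ℝ) ≤ n := Nat.cast_le.mpr hn
    have hna : 0 < n + a := by linarith
    have hnb : 0 < n + b := by linarith
    have := (Gamma_pos_of_pos hnb).ne'
    rw [eq_div_of_mul_eq hnb.ne' ((mul_comm _ _).trans (hu n hn)), ih, Nat.cast_succ,
      add_right_comm _ 1 a, add_right_comm _ 1 b, Gamma_add_one hna.ne', Gamma_add_one hnb.ne']
    field_simp

/-- The quotient `Γ(x + p) / Γ(x - p)`. The Hardy-weights are quotients of two of these, taken at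
the half-integers `x = n + 1/2`. -/
noncomputable def gammaRatio (p x : ℝ) : ℝ :=
  Gamma (x + p) / Gamma (x - p)

lemma gammaRatio_pos {p x : ℝ} (hp : |p| < x) : 0 < gammaRatio p x := by
  obtain ⟨h₁, h₂⟩ := abs_lt.mp hp
  exact div_pos (Gamma_pos_of_pos (by linarith)) (Gamma_pos_of_pos (by linarith))

lemma gammaRatio_add_one {p x : ℝ} (hp : |p| < x) :
    gammaRatio p (x + 1) = (x + p) / (x - p) * gammaRatio p x := by
  obtain ⟨h₁, h₂⟩ := abs_lt.mp hp
  rw [gammaRatio, gammaRatio, add_right_comm, add_sub_right_comm, Gamma_add_one (by linarith),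
    Gamma_add_one (by linarith), mul_div_mul_comm]

lemma gammaRatio_add_natCast_isEquivalent (p x : ℝ) :
    (fun n : ℕ ↦ gammaRatio p (x + n)) ~[atTop] fun n ↦ (n : ℝ) ^ (2 * p) := by
  convert! Gamma_natCast_add_div_isEquivalent (x + p) (x - p) using 2 with n n
  · rw [gammaRatio]
    ring_nf
  · ring_nf

lemma gammaRatio_quotient_lt_add_one {p q s t x : ℝ} (hp : |p| < x) (hq : |q| < x)
    (hs : |s| < x) (ht : |t| < x) (hsum : p + q = s + t) (hpos : 0 < p + q)
    (hprod : s * t < p * q) :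
    gammaRatio s x * gammaRatio t x / (gammaRatio p x * gammaRatio q x) <
      gammaRatio s (x + 1) * gammaRatio t (x + 1) /
        (gammaRatio p (x + 1) * gammaRatio q (x + 1)) := by
  have hΦ : 0 < gammaRatio s x * gammaRatio t x / (gammaRatio p x * gammaRatio q x) :=
    div_pos (mul_pos (gammaRatio_pos hs) (gammaRatio_pos ht))
      (mul_pos (gammaRatio_pos hp) (gammaRatio_pos hq))
  have hx : 0 < x := (abs_nonneg p).trans_lt hp
  have hxs : 0 < x - s := sub_pos.mpr (lt_of_abs_lt hs)
  have hxt : 0 < x - t := sub_pos.mpr (lt_of_abs_lt ht)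
  have hxp : 0 < x + p := neg_lt_iff_pos_add'.mp (neg_lt_of_abs_lt hp)
  have hxq : 0 < x + q := neg_lt_iff_pos_add'.mp (neg_lt_of_abs_lt hq)
  have hden : 0 < (x - s) * (x - t) * ((x + p) * (x + q)) :=
    mul_pos (mul_pos hxs hxt) (mul_pos hxp hxq)
  have hfactor : 1 < (x + s) * (x + t) * ((x - p) * (x - q)) /
      ((x - s) * (x - t) * ((x + p) * (x + q))) := by
    rw [one_lt_div hden, ← sub_pos]
    calc 0 < 2 * x * (p + q) * (p * q - s * t) :=
          mul_pos (by positivity) (sub_pos.mpr hprod)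
      _ = _ := by rw [eq_sub_of_add_eq hsum]; ring
  calc _ < _ := lt_mul_of_one_lt_left hΦ hfactor
    _ = _ := by
      rw [gammaRatio_add_one hp, gammaRatio_add_one hq, gammaRatio_add_one hs,
        gammaRatio_add_one ht]
      field_simp

/-- The quotient of the two sides increases under `x ↦ x + 1` and tends to `1`. -/
lemma gammaRatio_mul_lt_gammaRatio_mul {p q s t x : ℝ} (hp : |p| < x) (hq : |q| < x)
    (hs : |s| < x) (ht : |t| < x) (hsum : p + q = s + t) (hpos : 0 < p + q)
    (hprod : s * t < p * q) :
    gammaRatio s x * gammaRatio t x < gammaRatio p x * gammaRatio q x := by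
  set Φ : ℕ → ℝ := fun n ↦ gammaRatio s (x + n) * gammaRatio t (x + n) /
    (gammaRatio p (x + n) * gammaRatio q (x + n)) with hΦ
  have hmono : StrictMono Φ := strictMono_nat_of_lt_succ fun n ↦ by
    have hxn : x ≤ x + n := le_add_of_nonneg_right n.cast_nonneg
    simpa only [hΦ, Nat.cast_succ, add_assoc] using
      gammaRatio_quotient_lt_add_one (hp.trans_le hxn) (hq.trans_le hxn) (hs.trans_le hxn)
        (ht.trans_le hxn) hsum hpos hprod
  have hlim : Tendsto Φ atTop (𝓝 1) := by
    rw [← isEquivalent_const_iff_tendsto one_ne_zero]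
    refine ((((gammaRatio_add_natCast_isEquivalent s x).mul
      (gammaRatio_add_natCast_isEquivalent t x)).div
      ((gammaRatio_add_natCast_isEquivalent p x).mul
      (gammaRatio_add_natCast_isEquivalent q x))).congr_right ?_)
    filter_upwards [eventually_gt_atTop 0] with n hn
    have hn' : 0 < (n : ℝ) := Nat.cast_pos.mpr hn
    simp only [Pi.div_apply, Pi.mul_apply, ← rpow_add hn', ← mul_add, hsum]
    exact div_self (by positivity)
  have hlt : Φ 0 < 1 := (hmono zero_lt_one).trans_le (hmono.monotone.ge_of_tendsto hlim 1)
  simpa only [hΦ, Nat.cast_zero, add_zero,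
    div_lt_one (mul_pos (gammaRatio_pos hp) (gammaRatio_pos hq))] using hlt

end GammaQuotients

section Symbol

/-- The Fourier symbol `2 - 2 cos t` of the discrete Laplacian; that of its fractional power
`(-Δ)^σ` is `laplaceSymbol t ^ σ`. -/
noncomputable def laplaceSymbol (t : ℝ) : ℝ :=
  2 - 2 * cos t

lemma laplaceSymbol_nonneg (t : ℝ) : 0 ≤ laplaceSymbol t := by
  linarith [cos_le_one t, laplaceSymbol.eq_1 t]

@[fun_prop]
lemma continuous_laplaceSymbol : Continuous laplaceSymbol := by
  unfold laplaceSymbol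
  fun_prop

lemma continuous_laplaceSymbol_rpow {r : ℝ} (hr : 0 ≤ r) :
    Continuous fun t ↦ laplaceSymbol t ^ r :=
  continuous_laplaceSymbol.rpow_const fun _ ↦ Or.inr hr

lemma sq_mul_le_laplaceSymbol {t : ℝ} (h0 : 0 ≤ t) (hπ : t ≤ π) :
    (2 / π * t) ^ 2 ≤ laplaceSymbol t := by
  have hsin : 2 / π * (t / 2) ≤ sin (t / 2) := mul_le_sin (by linarith) (by linarith)
  have hsq : (2 / π * (t / 2)) ^ 2 ≤ sin (t / 2) ^ 2 :=
    pow_le_pow_left₀ (by positivity) hsin 2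
  rw [laplaceSymbol, ← mul_div_cancel₀ t (two_ne_zero' ℝ), cos_two_mul, cos_sq']
  linarith

lemma laplaceSymbol_pos {t : ℝ} (h0 : 0 < t) (hπ : t ≤ π) : 0 < laplaceSymbol t :=
  (by positivity : 0 < (2 / π * t) ^ 2).trans_le (sq_mul_le_laplaceSymbol h0.le hπ)

lemma sin_sq_eq_laplaceSymbol_mul (t : ℝ) :
    sin t ^ 2 = laplaceSymbol t * (4 - laplaceSymbol t) / 4 := by
  rw [sin_sq, laplaceSymbol]
  ring

lemma sin_sq_le_laplaceSymbol (t : ℝ) : sin t ^ 2 ≤ laplaceSymbol t := by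
  rw [sin_sq_eq_laplaceSymbol_mul]
  nlinarith [sq_nonneg (laplaceSymbol t)]

lemma laplaceSymbol_lt_four {t : ℝ} (h0 : 0 < t) (hπ : t < π) : laplaceSymbol t < 4 := by
  have hsin : 0 < sin t ^ 2 := pow_pos (sin_pos_of_pos_of_lt_pi h0 hπ) 2
  rw [sin_sq_eq_laplaceSymbol_mul] at hsin
  nlinarith [laplaceSymbol_pos h0 hπ.le]

lemma sin_eq_laplaceSymbol_rpow_mul {t : ℝ} (h0 : 0 ≤ t) (hπ : t ≤ π) :
    sin t = laplaceSymbol t ^ (1 / 2 : ℝ) * (4 - laplaceSymbol t) ^ (1 / 2 : ℝ) / 2 := by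
  have hsq : laplaceSymbol t * (4 - laplaceSymbol t) = (2 * sin t) ^ 2 := by
    linear_combination -4 * sin_sq_eq_laplaceSymbol_mul t
  rw [← sqrt_eq_rpow, ← sqrt_eq_rpow, ← sqrt_mul (laplaceSymbol_nonneg t), hsq,
    sqrt_sq (mul_nonneg zero_le_two (sin_nonneg_of_nonneg_of_le_pi h0 hπ)),
    mul_div_cancel_left₀ _ two_ne_zero]

lemma hasDerivAt_laplaceSymbol (t : ℝ) : HasDerivAt laplaceSymbol (2 * sin t) t :=
  (((hasDerivAt_cos t).const_mul 2).const_sub 2).congr_deriv (by ring)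

lemma hasDerivAt_laplaceSymbol_rpow (r : ℝ) {t : ℝ} (ht : 0 < laplaceSymbol t) :
    HasDerivAt (fun t ↦ laplaceSymbol t ^ r) (r * laplaceSymbol t ^ (r - 1) * (2 * sin t)) t :=
  ((hasDerivAt_laplaceSymbol t).rpow_const (Or.inl ht.ne')).congr_deriv (by ring)

lemma intervalIntegrable_laplaceSymbol_rpow {r : ℝ} (hr : -(1 / 2) < r) :
    IntervalIntegrable (fun t ↦ laplaceSymbol t ^ r) volume 0 π := by
  rcases le_or_gt 0 r with hr0 | hr0
  · exact (continuous_laplaceSymbol_rpow hr0).intervalIntegrable _ _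
  · have hmajorant : IntervalIntegrable (fun t ↦ ((2 / π) ^ 2) ^ r * t ^ (2 * r)) volume 0 π :=
      (intervalIntegral.intervalIntegrable_rpow' (by linarith)).const_mul _
    refine hmajorant.mono_fun
      (continuous_laplaceSymbol.measurable.pow_const r).aestronglyMeasurable ?_
    filter_upwards [ae_restrict_mem measurableSet_uIoc] with t ht
    rw [Set.uIoc_of_le pi_pos.le] at ht
    have ht0 := ht.1
    rw [norm_of_nonneg (rpow_nonneg (laplaceSymbol_nonneg _) _), norm_of_nonneg (by positivity)]
    calc laplaceSymbol t ^ r ≤ ((2 / π * t) ^ 2) ^ r :=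
          rpow_le_rpow_of_nonpos (by positivity) (sq_mul_le_laplaceSymbol ht0.le ht.2) hr0.le
      _ = _ := by
          rw [mul_pow, mul_rpow (by positivity) (by positivity), ← rpow_natCast t 2,
            ← rpow_mul ht0.le, Nat.cast_ofNat]

end Symbol

section TrigonometricBeta

lemma integral_rpow_mul_one_sub_rpow {u v : ℝ} (hu : 0 < u) (hv : 0 < v) :
    ∫ x in 0..1, x ^ (u - 1) * (1 - x) ^ (v - 1) = Gamma u * Gamma v / Gamma (u + v) := by
  have hbeta := ProbabilityTheory.beta_eq_betaIntegralReal u v hu hv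
  rw [ProbabilityTheory.beta] at hbeta
  rw [hbeta, Complex.betaIntegral, ← Complex.ofReal_re (∫ x in 0..1, _),
    ← intervalIntegral.integral_ofReal]
  congr 1
  refine intervalIntegral.integral_congr fun x hx ↦ ?_
  rw [Set.uIcc_of_le zero_le_one] at hx
  push_cast [Complex.ofReal_cpow hx.1, Complex.ofReal_cpow (sub_nonneg.mpr hx.2)]
  rfl

lemma image_laplaceSymbol_div_four :
    (fun t ↦ laplaceSymbol t / 4) '' Set.Ioo 0 π = Set.Ioo 0 1 := by
  refine Set.Subset.antisymm ?_ fun x hx ↦ ?_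
  · rintro _ ⟨t, ht, rfl⟩
    have hpos := laplaceSymbol_pos ht.1 ht.2.le
    have hlt := laplaceSymbol_lt_four ht.1 ht.2
    constructor <;> dsimp only <;> linarith
  · have hcont : ContinuousOn (fun t ↦ laplaceSymbol t / 4) (Set.Icc 0 π) := by fun_prop
    have := intermediate_value_Ioo pi_pos.le hcont
    simp only [laplaceSymbol, cos_zero, cos_pi] at this
    norm_num at this
    exact this hx

lemma injOn_laplaceSymbol_div_four : Set.InjOn (fun t ↦ laplaceSymbol t / 4) (Set.Ioo 0 π) := by
  intro t ht u hu htu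
  refine injOn_cos (Set.Ioo_subset_Icc_self ht) (Set.Ioo_subset_Icc_self hu) ?_
  simp only [laplaceSymbol] at htu
  linarith

lemma integral_laplaceSymbol_rpow_mul {p q : ℝ} (hp : -(1 / 2) < p) (hq : -(1 / 2) < q) :
    ∫ t in 0..π, laplaceSymbol t ^ p * (4 - laplaceSymbol t) ^ q =
      4 ^ (p + q) * (Gamma (p + 1 / 2) * Gamma (q + 1 / 2) / Gamma (p + q + 1)) := by
  have hbeta := integral_rpow_mul_one_sub_rpow (u := p + 1 / 2) (v := q + 1 / 2)
    (by linarith) (by linarith)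
  rw [intervalIntegral.integral_of_le zero_le_one, integral_Ioc_eq_integral_Ioo,
    ← image_laplaceSymbol_div_four, integral_image_eq_integral_abs_deriv_smul measurableSet_Ioo
    (fun t _ ↦ ((hasDerivAt_laplaceSymbol t).div_const 4).hasDerivWithinAt)
    injOn_laplaceSymbol_div_four] at hbeta
  rw [intervalIntegral.integral_of_le pi_pos.le, integral_Ioc_eq_integral_Ioo,
    show p + q + 1 = p + 1 / 2 + (q + 1 / 2) by ring, ← hbeta, ← integral_const_mul]
  refine setIntegral_congr_fun measurableSet_Ioo fun t ht ↦ ?_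
  have hω := laplaceSymbol_pos ht.1 ht.2.le
  have hω' : 0 < 4 - laplaceSymbol t := sub_pos.mpr (laplaceSymbol_lt_four ht.1 ht.2)
  have hsin := (sin_pos_of_pos_of_lt_pi ht.1 ht.2).le
  have hsub : 1 - laplaceSymbol t / 4 = (4 - laplaceSymbol t) / 4 := by ring
  have hp' : laplaceSymbol t ^ p =
      laplaceSymbol t ^ (p + 1 / 2 - 1) * laplaceSymbol t ^ (1 / 2 : ℝ) := by
    rw [← rpow_add hω]
    ring_nf
  have hq' : (4 - laplaceSymbol t) ^ q =
      (4 - laplaceSymbol t) ^ (q + 1 / 2 - 1) * (4 - laplaceSymbol t) ^ (1 / 2 : ℝ) := by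
    rw [← rpow_add hω']
    ring_nf
  have h4 : (4 : ℝ) ^ (p + q) = 4 ^ (p + 1 / 2 - 1) * 4 ^ (q + 1 / 2 - 1) * 4 := by
    rw [← rpow_add four_pos, ← rpow_add_one four_ne_zero]
    ring_nf
  rw [smul_eq_mul, abs_of_nonneg (by positivity), hsub, div_rpow hω.le zero_le_four,
    div_rpow hω'.le zero_le_four, hp', hq', h4, sin_eq_laplaceSymbol_rpow_mul ht.1.le ht.2.le]
  field_simp

end TrigonometricBeta

section SineMoments

lemma abs_sin_natCast_mul_le (n : ℕ) (t : ℝ) : |sin (n * t)| ≤ n * |sin t| := by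
  induction n with
  | zero => simp
  | succ n ih =>
    rw [Nat.cast_succ, add_mul, one_mul, sin_add]
    calc |sin (n * t) * cos t + cos (n * t) * sin t|
        ≤ |sin (n * t)| * |cos t| + |cos (n * t)| * |sin t| := by
          simpa only [abs_mul] using abs_add_le (sin (n * t) * cos t) (cos (n * t) * sin t)
      _ ≤ n * |sin t| * 1 + 1 * |sin t| := by
          gcongr <;> exact abs_cos_le_one _
      _ = (n + 1) * |sin t| := by ring

lemma hasDerivAt_sin_natCast_mul (n : ℕ) (t : ℝ) :
    HasDerivAt (fun t ↦ sin (n * t)) (n * cos (n * t)) t := by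
  simpa [mul_comm] using ((hasDerivAt_id t).const_mul (n : ℝ)).sin

/-- The moment `∫ ω ^ s sin t sin (n t) dt` over `[0, π]` of a power of the symbol `ω`, convergent
for `s > -3/2`. It is a sine Fourier coefficient of `ω ^ s sin t`. -/
noncomputable def sineMoment (s : ℝ) (n : ℕ) : ℝ :=
  ∫ t in 0..π, laplaceSymbol t ^ s * (sin t * sin (n * t))

lemma sineMoment_zero_right (s : ℝ) : sineMoment s 0 = 0 := by
  simp [sineMoment]

lemma abs_sineMoment_integrand_le (s : ℝ) (n : ℕ) {t : ℝ} (h0 : 0 < t) (hπ : t ≤ π) :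
    |laplaceSymbol t ^ s * (sin t * sin (n * t))| ≤ n * laplaceSymbol t ^ (s + 1) := by
  have hω := laplaceSymbol_pos h0 hπ
  calc |laplaceSymbol t ^ s * (sin t * sin (n * t))|
      = laplaceSymbol t ^ s * (|sin t| * |sin (n * t)|) := by
        rw [abs_mul, abs_mul, abs_of_nonneg (rpow_nonneg hω.le _)]
    _ ≤ laplaceSymbol t ^ s * (|sin t| * (n * |sin t|)) := by
        gcongr
        exact abs_sin_natCast_mul_le n t
    _ = n * (laplaceSymbol t ^ s * sin t ^ 2) := by rw [← sq_abs (sin t)]; ring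
    _ ≤ n * (laplaceSymbol t ^ s * laplaceSymbol t) := by
        gcongr
        exact sin_sq_le_laplaceSymbol t
    _ = n * laplaceSymbol t ^ (s + 1) := by rw [rpow_add_one hω.ne']

lemma intervalIntegrable_sineMoment {s : ℝ} (hs : -(3 / 2) < s) (n : ℕ) :
    IntervalIntegrable (fun t ↦ laplaceSymbol t ^ s * (sin t * sin (n * t))) volume 0 π := by
  refine ((intervalIntegrable_laplaceSymbol_rpow (r := s + 1) (by linarith)).const_mul
    (n : ℝ)).mono_fun ?_ ?_
  · have := continuous_laplaceSymbol.measurable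
    exact Measurable.aestronglyMeasurable (by fun_prop)
  · filter_upwards [ae_restrict_mem measurableSet_uIoc] with t ht
    rw [Set.uIoc_of_le pi_pos.le] at ht
    exact (abs_sineMoment_integrand_le s n ht.1 ht.2).trans (le_abs_self _)

/-- A primitive of a combination of two consecutive sine moment integrands which vanishes at both
ends of `[0, π]`, and so provides the recurrence `sineMoment_add_one`. -/
noncomputable def sineMomentPrimitive (s : ℝ) (n : ℕ) (t : ℝ) : ℝ :=
  laplaceSymbol t ^ (s + 1) * (n * sin ((n + 1 : ℕ) * t) + (n + 1) * sin (n * t))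

lemma hasDerivAt_sineMomentPrimitive (s : ℝ) (n : ℕ) {t : ℝ} (ht : 0 < laplaceSymbol t) :
    HasDerivAt (sineMomentPrimitive s n)
      (2 * (n * (n + 2 + s) * (laplaceSymbol t ^ s * (sin t * sin ((n + 1 : ℕ) * t))) -
        (n + 1) * (n - 1 - s) * (laplaceSymbol t ^ s * (sin t * sin (n * t))))) t := by
  refine ((hasDerivAt_laplaceSymbol_rpow (s + 1) ht).mul
    (((hasDerivAt_sin_natCast_mul (n + 1) t).const_mul (n : ℝ)).add
    ((hasDerivAt_sin_natCast_mul n t).const_mul (n + 1 : ℝ)))).congr_deriv ?_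
  simp only [Pi.add_apply, add_sub_cancel_right, rpow_add_one ht.ne', Nat.cast_succ, add_mul,
    one_mul, sin_add, cos_add]
  generalize laplaceSymbol t ^ s = x
  rw [laplaceSymbol]
  linear_combination -2 * x * n * (n + 1) * cos (n * t) * sin_sq_add_cos_sq t

lemma abs_sineMomentPrimitive_le (s : ℝ) (n : ℕ) {t : ℝ} (h0 : 0 < t) (hπ : t ≤ π) :
    |sineMomentPrimitive s n t| ≤ 2 * (n * (n + 1)) * laplaceSymbol t ^ (s + 3 / 2) := by
  have hω := laplaceSymbol_pos h0 hπ
  have hsin : |sin t| ≤ laplaceSymbol t ^ (1 / 2 : ℝ) := by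
    rw [← sqrt_eq_rpow]
    exact abs_le_sqrt (sin_sq_le_laplaceSymbol t)
  have hsum : |n * sin ((n + 1 : ℕ) * t) + (n + 1) * sin (n * t)| ≤
      2 * (n * (n + 1)) * laplaceSymbol t ^ (1 / 2 : ℝ) := by
    calc _ ≤ n * |sin ((n + 1 : ℕ) * t)| + (n + 1) * |sin (n * t)| := by
          refine (abs_add_le _ _).trans_eq ?_
          rw [abs_mul, abs_mul, Nat.abs_cast, abs_of_nonneg (by positivity : (0 : ℝ) ≤ n + 1)]
      _ ≤ n * ((n + 1 : ℕ) * |sin t|) + (n + 1) * (n * |sin t|) := by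
          gcongr <;> exact abs_sin_natCast_mul_le _ t
      _ = 2 * (n * (n + 1)) * |sin t| := by push_cast; ring
      _ ≤ _ := by gcongr
  rw [sineMomentPrimitive, abs_mul, abs_of_nonneg (rpow_nonneg hω.le _)]
  calc _ ≤ laplaceSymbol t ^ (s + 1) *
        (2 * (n * (n + 1)) * laplaceSymbol t ^ (1 / 2 : ℝ)) := by gcongr
    _ = 2 * (n * (n + 1)) * laplaceSymbol t ^ (s + 3 / 2) := by
        rw [show s + 3 / 2 = s + 1 + 1 / 2 by ring, rpow_add hω (s + 1)]
        ring

lemma tendsto_sineMomentPrimitive_zero {s : ℝ} (hs : -(3 / 2) < s) (n : ℕ) :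
    Tendsto (sineMomentPrimitive s n) (𝓝[>] 0) (𝓝 0) := by
  have hmajorant : Tendsto (fun t ↦ 2 * (n * (n + 1)) * laplaceSymbol t ^ (s + 3 / 2))
      (𝓝[>] 0) (𝓝 0) := by
    have hcont : Continuous fun t ↦ 2 * (n * (n + 1)) * laplaceSymbol t ^ (s + 3 / 2) :=
      continuous_const.mul (continuous_laplaceSymbol_rpow (by linarith))
    refine (hcont.tendsto' 0 0 ?_).mono_left nhdsWithin_le_nhds
    rw [laplaceSymbol, cos_zero, mul_one, sub_self, zero_rpow (by linarith), mul_zero]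
  refine squeeze_zero_norm' ?_ hmajorant
  filter_upwards [Ioo_mem_nhdsGT pi_pos] with t ht
  exact abs_sineMomentPrimitive_le s n ht.1 ht.2.le

lemma tendsto_sineMomentPrimitive_pi (s : ℝ) (n : ℕ) :
    Tendsto (sineMomentPrimitive s n) (𝓝[<] π) (𝓝 0) := by
  have hcont : ContinuousAt (sineMomentPrimitive s n) π :=
    (hasDerivAt_sineMomentPrimitive s n (laplaceSymbol_pos pi_pos le_rfl)).continuousAt
  have hπ : sineMomentPrimitive s n π = 0 := by
    simp only [sineMomentPrimitive, sin_nat_mul_pi, mul_zero, add_zero]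
  exact hπ ▸ hcont.tendsto.mono_left nhdsWithin_le_nhds

lemma sineMoment_add_one {s : ℝ} (hs : -(3 / 2) < s) (n : ℕ) :
    n * (n + 2 + s) * sineMoment s (n + 1) = (n + 1) * (n - 1 - s) * sineMoment s n := by
  have hint := (intervalIntegrable_sineMoment hs n).const_mul ((n + 1) * (n - 1 - s))
  have hint' := (intervalIntegrable_sineMoment hs (n + 1)).const_mul (n * (n + 2 + s))
  have hFTC := intervalIntegral.integral_eq_sub_of_hasDerivAt_of_tendsto pi_pos
    (fun t ht ↦ hasDerivAt_sineMomentPrimitive s n (laplaceSymbol_pos ht.1 ht.2.le))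
    ((hint'.sub hint).const_mul 2) (tendsto_sineMomentPrimitive_zero hs n)
    (tendsto_sineMomentPrimitive_pi s n)
  rw [intervalIntegral.integral_const_mul, intervalIntegral.integral_sub hint' hint,
    intervalIntegral.integral_const_mul, intervalIntegral.integral_const_mul] at hFTC
  simp only [sineMoment]
  linarith

lemma Gamma_three_div_two : Gamma (3 / 2) = √π / 2 := by
  rw [show (3 / 2 : ℝ) = 1 / 2 + 1 by norm_num, Gamma_add_one (by norm_num), Gamma_one_half_eq]
  ring

lemma sineMoment_one {s : ℝ} (hs : -(3 / 2) < s) :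
    sineMoment s 1 = 4 ^ (s + 1) * (Gamma (s + 3 / 2) * (√π / 2) / Gamma (s + 3)) := by
  have hbeta := integral_laplaceSymbol_rpow_mul (p := s + 1) (q := 1) (by linarith) (by norm_num)
  rw [show s + 1 + 1 / 2 = s + 3 / 2 by ring, show (1 : ℝ) + 1 / 2 = 3 / 2 by norm_num,
    show s + 1 + 1 + 1 = s + 3 by ring, rpow_add_one four_ne_zero, Gamma_three_div_two] at hbeta
  have hcongr : ∫ t in 0..π, laplaceSymbol t ^ (s + 1) * (4 - laplaceSymbol t) ^ (1 : ℝ) =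
      4 * sineMoment s 1 := by
    rw [sineMoment, ← intervalIntegral.integral_const_mul]
    refine intervalIntegral.integral_congr_ae (.of_forall fun t ht ↦ ?_)
    rw [Set.uIoc_of_le pi_pos.le] at ht
    rw [rpow_add_one (laplaceSymbol_pos ht.1 ht.2).ne', rpow_one, Nat.cast_one, one_mul]
    linear_combination -4 * laplaceSymbol t ^ s * sin_sq_eq_laplaceSymbol_mul t
  linarith

end SineMoments

section Riesz

variable {α : ℝ}

lemma Riesz_zero_right (α : ℝ) : Riesz α 0 = 0 := by
  simp [Riesz]

lemma Riesz_pos (h0 : 0 < α) (h1 : α < 3 / 2) {n : ℕ} (hn : n ≠ 0) : 0 < Riesz α n := by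
  have hn' : (1 : ℝ) ≤ n := Nat.one_le_cast.mpr (Nat.one_le_iff_ne_zero.mpr hn)
  have := Gamma_pos_of_pos h0
  have := Gamma_pos_of_pos (show 0 < 3 / 2 - α by linarith)
  have := Gamma_pos_of_pos (show 0 < n + α - 1 by linarith)
  have := Gamma_pos_of_pos (show 0 < n - α + 2 by linarith)
  rw [Riesz]
  positivity

lemma Riesz_nonneg (h0 : 0 < α) (h1 : α < 3 / 2) (n : ℕ) : 0 ≤ Riesz α n := by
  rcases eq_or_ne n 0 with rfl | hn
  · exact (Riesz_zero_right α).ge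
  · exact (Riesz_pos h0 h1 hn).le

lemma Riesz_isBigO (α : ℝ) :
    Riesz α =O[atTop] fun n : ℕ ↦ (n : ℝ) ^ (2 * α - 2) := by
  have hΓ := ((Gamma_natCast_add_div_isEquivalent (α - 1) (2 - α)).isBigO.mul
    (isBigO_refl (fun n : ℕ ↦ (n : ℝ)) atTop)).const_mul_left
      (4 / (4 ^ α * √2) * Gamma (3 / 2 - α) / Gamma α)
  refine hΓ.congr' (.of_forall fun n ↦ ?_) ?_
  · dsimp only
    rw [Riesz, ← add_sub_assoc, show (n : ℝ) + (2 - α) = n - α + 2 by ring]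
    ring
  · filter_upwards [eventually_gt_atTop 0] with n hn
    rw [← rpow_add_one (by positivity)]
    ring_nf

lemma exists_Riesz_le (α : ℝ) :
    ∃ C > 0, ∀ n : ℕ, n ≠ 0 → Riesz α n ≤ C * (n : ℝ) ^ (2 * α - 2) := by
  obtain ⟨C, hC, hbound⟩ := bound_of_isBigO_nat_atTop (Riesz_isBigO α)
  refine ⟨C, hC, fun n hn ↦ ?_⟩
  have hn' : 0 < (n : ℝ) ^ (2 * α - 2) := by positivity
  simpa only [norm_of_nonneg hn'.le] using (le_norm_self _).trans (hbound hn'.ne')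

lemma Wweight_mul_Riesz (σ : ℝ) (h0 : 0 < α) (h1 : α < 3 / 2) (n : ℕ) :
    Wweight σ α n * Riesz α n = Riesz (α - σ) n := by
  rcases eq_or_ne n 0 with rfl | hn
  · simp only [Riesz_zero_right, mul_zero]
  have hn' : (1 : ℝ) ≤ n := Nat.one_le_cast.mpr (Nat.one_le_iff_ne_zero.mpr hn)
  have hΓα := (Gamma_pos_of_pos h0).ne'
  have hΓ₁ := (Gamma_pos_of_pos (show 0 < 3 / 2 - α by linarith)).ne'
  have hΓ₂ := (Gamma_pos_of_pos (show 0 < n + α - 1 by linarith)).ne'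
  have hΓ₃ := (Gamma_pos_of_pos (show 0 < n - α + 2 by linarith)).ne'
  rw [Wweight, Riesz, Riesz, ← sub_add, ← sub_add, ← add_sub_assoc, rpow_sub four_pos]
  generalize Gamma (3 / 2 - α) = G at hΓ₁ ⊢
  field_simp

lemma sineMoment_neg (h0 : 0 < α) (h1 : α < 3 / 2) (n : ℕ) :
    sineMoment (-α) n = √(π / 2) * Riesz α n := by
  rcases eq_or_ne n 0 with rfl | hn
  · rw [sineMoment_zero_right, Riesz_zero_right, mul_zero]
  have hrec : ∀ n : ℕ, 1 ≤ n → ((n : ℝ) + (2 - α)) * (sineMoment (-α) (n + 1) / (n + 1 : ℕ)) =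
      (n + (α - 1)) * (sineMoment (-α) n / n) := by
    intro n hn
    have hn' : (n : ℝ) ≠ 0 := by positivity
    have := sineMoment_add_one (s := -α) (by linarith) n
    push_cast
    field_simp
    linear_combination this
  have hclosed := eq_mul_Gamma_div_Gamma_of_recurrence (u := fun n ↦ sineMoment (-α) n / n)
    (by simpa using h0) (by norm_num; linarith) hrec (Nat.one_le_iff_ne_zero.mpr hn)
  have hn' : (n : ℝ) ≠ 0 := Nat.cast_ne_zero.mpr hn
  have hΓ₃ := (Gamma_pos_of_pos (show 0 < 3 - α by linarith)).ne'
  rw [div_eq_iff hn', sineMoment_one (by linarith), Nat.cast_one, div_one, add_sub_cancel,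
    show -α + 3 = 3 - α by ring, show (1 : ℝ) + (2 - α) = 3 - α by ring] at hclosed
  rw [hclosed, Riesz, show -α + 3 / 2 = 3 / 2 - α by ring, ← add_sub_assoc,
    show (n : ℝ) + (2 - α) = n - α + 2 by ring, rpow_add_one four_ne_zero, rpow_neg zero_le_four,
    sqrt_div pi_pos.le]
  have h2 : √2 * √2 = (2 : ℝ) := mul_self_sqrt zero_le_two
  field_simp
  rw [sq, h2]
  ring

end Riesz

section CosineCoeff

variable {σ : ℝ}

/-- The cosine Fourier coefficients of the symbol `ω ^ σ`. They are the entries of the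
convolution kernel of `(-Δ)^σ` on the full line `ℤ`. -/
noncomputable def cosineCoeff (σ : ℝ) (k : ℕ) : ℝ :=
  1 / π * ∫ t in 0..π, laplaceSymbol t ^ σ * cos (k * t)

lemma continuous_laplaceSymbol_rpow_mul_cos (hσ : 0 ≤ σ) (k : ℕ) :
    Continuous fun t ↦ laplaceSymbol t ^ σ * cos (k * t) :=
  (continuous_laplaceSymbol_rpow hσ).mul (by fun_prop)

lemma cosineCoeff_zero (hσ : 0 ≤ σ) :
    cosineCoeff σ 0 = Gamma (2 * σ + 1) / Gamma (σ + 1) ^ 2 := by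
  have hbeta := integral_laplaceSymbol_rpow_mul (p := σ) (q := 0) (by linarith) (by norm_num)
  simp only [rpow_zero, mul_one, add_zero, zero_add, Gamma_one_half_eq] at hbeta
  have hdup := Gamma_mul_Gamma_add_half (σ + 1 / 2)
  rw [show σ + 1 / 2 + 1 / 2 = σ + 1 by ring, show 2 * (σ + 1 / 2) = 2 * σ + 1 by ring,
    show 1 - (2 * σ + 1) = -(2 * σ) by ring, rpow_neg zero_le_two, rpow_mul zero_le_two,
    rpow_two, show (2 : ℝ) ^ 2 = 4 by norm_num] at hdup
  have hΓ := (Gamma_pos_of_pos (show 0 < σ + 1 by linarith)).ne'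
  have hπ : √π ^ 2 = π := sq_sqrt pi_pos.le
  simp only [cosineCoeff, Nat.cast_zero, zero_mul, cos_zero, mul_one, hbeta]
  field_simp at hdup ⊢
  linear_combination √π * hdup + Gamma (σ * 2 + 1) * hπ

lemma cosineCoeff_add_one (hσ : 0 < σ) (k : ℕ) :
    (k + 1 + σ) * cosineCoeff σ (k + 1) = (k - σ) * cosineCoeff σ k := by
  have hderiv : ∀ t ∈ Set.Ioo 0 π, HasDerivAt
      (fun t ↦ laplaceSymbol t ^ σ * (sin ((k + 1 : ℕ) * t) - sin (k * t)))
      ((k + 1 + σ) * (laplaceSymbol t ^ σ * cos ((k + 1 : ℕ) * t)) -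
        (k - σ) * (laplaceSymbol t ^ σ * cos (k * t))) t := by
    intro t ht
    have hω := laplaceSymbol_pos ht.1 ht.2.le
    refine ((hasDerivAt_laplaceSymbol_rpow σ hω).mul ((hasDerivAt_sin_natCast_mul (k + 1) t).sub
      (hasDerivAt_sin_natCast_mul k t))).congr_deriv ?_
    have hpow : laplaceSymbol t ^ σ = laplaceSymbol t ^ (σ - 1) * laplaceSymbol t := by
      rw [← rpow_add_one hω.ne', sub_add_cancel]
    simp only [Pi.sub_apply, hpow, Nat.cast_succ, add_mul, one_mul, sin_add, cos_add]
    generalize laplaceSymbol t ^ (σ - 1) = x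
    rw [laplaceSymbol]
    linear_combination 2 * σ * x * cos (k * t) * sin_sq_add_cos_sq t
  have hcont : Continuous fun t ↦
      laplaceSymbol t ^ σ * (sin ((k + 1 : ℕ) * t) - sin (k * t)) :=
    (continuous_laplaceSymbol_rpow hσ.le).mul (by fun_prop)
  have hint (k : ℕ) (c : ℝ) : IntervalIntegrable
      (fun t ↦ c * (laplaceSymbol t ^ σ * cos (k * t))) volume 0 π :=
    ((continuous_laplaceSymbol_rpow_mul_cos hσ.le k).intervalIntegrable _ _).const_mul c
  have hFTC := intervalIntegral.integral_eq_sub_of_hasDerivAt_of_le pi_pos.le hcont.continuousOn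
    hderiv ((hint _ _).sub (hint _ _))
  rw [intervalIntegral.integral_sub (hint _ _) (hint _ _), intervalIntegral.integral_const_mul,
    intervalIntegral.integral_const_mul] at hFTC
  simp only [sin_nat_mul_pi, mul_zero, sin_zero, sub_zero] at hFTC
  simp only [cosineCoeff]
  linear_combination 1 / π * hFTC

lemma cosineCoeff_add_one_sub (hσ : 0 < σ) (k : ℕ) :
    cosineCoeff σ (k + 1) - cosineCoeff σ k = (1 + 2 * σ) / (k + 1 + σ) * -cosineCoeff σ k := by
  field_simp
  linear_combination cosineCoeff_add_one hσ k

lemma cosineCoeff_nonpos (h0 : 0 < σ) (h1 : σ ≤ 1) {k : ℕ} (hk : k ≠ 0) :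
    cosineCoeff σ k ≤ 0 := by
  induction k, Nat.one_le_iff_ne_zero.mpr hk using Nat.le_induction with
  | base =>
    have hrec := cosineCoeff_add_one h0 0
    have hΓ := Gamma_pos_of_pos (show 0 < σ + 1 by linarith)
    have hΓ' := Gamma_pos_of_pos (show 0 < 2 * σ + 1 by linarith)
    have h00 : 0 < cosineCoeff σ 0 := by rw [cosineCoeff_zero h0.le]; positivity
    rw [Nat.cast_zero, zero_add, zero_add, zero_sub] at hrec
    exact nonpos_of_mul_nonpos_right (hrec.trans_le (by nlinarith)) (by linarith : 0 < 1 + σ)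
  | succ k hk1 ih =>
    have hk' : (1 : ℝ) ≤ k := mod_cast hk1
    refine nonpos_of_mul_nonpos_right ((cosineCoeff_add_one h0 k).trans_le ?_)
      (by positivity : (0 : ℝ) < k + 1 + σ)
    exact mul_nonpos_of_nonneg_of_nonpos (by linarith) (ih (by lia))

lemma cosineCoeff_le_cosineCoeff (h0 : 0 < σ) (h1 : σ ≤ 1) {k l : ℕ} (hk : k ≠ 0)
    (hkl : k ≤ l) : cosineCoeff σ k ≤ cosineCoeff σ l := by
  induction l, hkl using Nat.le_induction with
  | base => exact le_rfl
  | succ l hkl ih =>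
    refine ih.trans (sub_nonneg.mp ?_)
    rw [cosineCoeff_add_one_sub h0]
    exact mul_nonneg (by positivity) (neg_nonneg.mpr (cosineCoeff_nonpos h0 h1 (by lia)))

lemma cosineCoeff_isBigO (hσ : 0 < σ) :
    cosineCoeff σ =O[atTop] fun k : ℕ ↦ (k : ℝ) ^ (-(1 + 2 * σ)) := by
  set N := ⌊σ⌋₊ + 1
  have hN : σ < N := by simpa only [N, Nat.cast_succ] using Nat.lt_floor_add_one σ
  have hrec : ∀ k, N ≤ k →
      (k + (1 + σ)) * cosineCoeff σ (k + 1) = (k + -σ) * cosineCoeff σ k := by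
    intro k _
    linear_combination cosineCoeff_add_one hσ k
  have hΓ := ((Gamma_natCast_add_div_isEquivalent (-σ) (1 + σ)).isBigO).const_mul_left
    (cosineCoeff σ N * (Gamma (N + (1 + σ)) / Gamma (N + -σ)))
  refine hΓ.congr' ?_ (.of_forall fun k ↦ by ring_nf)
  filter_upwards [eventually_ge_atTop N] with k hk
  exact (eq_mul_Gamma_div_Gamma_of_recurrence (by linarith) (by linarith) hrec hk).symm

lemma exists_neg_cosineCoeff_le (hσ : 0 < σ) :
    ∃ C > 0, ∀ k : ℕ, k ≠ 0 → -cosineCoeff σ k ≤ C * (k : ℝ) ^ (-(1 + 2 * σ)) := by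
  obtain ⟨C, hC, hbound⟩ := bound_of_isBigO_nat_atTop (cosineCoeff_isBigO hσ)
  refine ⟨C, hC, fun k hk ↦ ?_⟩
  have hk' : 0 < (k : ℝ) ^ (-(1 + 2 * σ)) := by positivity
  simpa only [norm_of_nonneg hk'.le] using (neg_le_abs _).trans (hbound hk'.ne')

lemma summable_cosineCoeff (hσ : 0 < σ) : Summable (cosineCoeff σ) :=
  summable_of_isBigO_nat (summable_nat_rpow.mpr (by linarith)) (cosineCoeff_isBigO hσ)

lemma summable_mul_cosineCoeff_add_sub (hσ : 0 < σ) (j : ℕ) :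
    Summable fun k : ℕ ↦ k * (cosineCoeff σ (k + j) - cosineCoeff σ k) := by
  have hκ := summable_cosineCoeff hσ
  have hstep : Summable fun k : ℕ ↦ k * (cosineCoeff σ (k + 1) - cosineCoeff σ k) := by
    refine (hκ.abs.mul_left (1 + 2 * σ)).of_norm_bounded fun k ↦ ?_
    have hk : (k : ℝ) / (k + 1 + σ) ≤ 1 := div_le_one_of_le₀ (by linarith) (by positivity)
    calc ‖k * (cosineCoeff σ (k + 1) - cosineCoeff σ k)‖
        = (1 + 2 * σ) * |cosineCoeff σ k| * (k / (k + 1 + σ)) := by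
          rw [cosineCoeff_add_one_sub hσ, norm_eq_abs, abs_mul, abs_mul, abs_neg,
            abs_of_nonneg (by positivity : 0 ≤ (1 + 2 * σ) / (k + 1 + σ)), Nat.abs_cast]
          ring
      _ ≤ (1 + 2 * σ) * |cosineCoeff σ k| := mul_le_of_le_one_right (by positivity) hk
  induction j with
  | zero => simp
  | succ j ih =>
    have hshift (i : ℕ) : Summable fun k ↦ cosineCoeff σ (k + i) := (summable_nat_add_iff i).mpr hκ
    refine ((ih.add ((summable_nat_add_iff j).mpr hstep)).sub
      (((hshift (j + 1)).sub (hshift j)).mul_left (j : ℝ))).congr fun k ↦ ?_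
    push_cast
    ring_nf

end CosineCoeff

section Kernel

variable {σ : ℝ}

lemma rbinom_sub_right (a b : ℝ) : rbinom a (a - b) = rbinom a b := by
  rw [rbinom, rbinom, sub_sub_cancel, mul_comm (Gamma (b + 1))]

lemma neg_one_pow_mul_rbinom (hσ : 0 < σ) (k : ℕ) :
    (-1) ^ k * rbinom (2 * σ) (σ + k) = cosineCoeff σ k := by
  induction k with
  | zero =>
    rw [cosineCoeff_zero hσ.le, rbinom, Nat.cast_zero, pow_zero, one_mul, add_zero,
      two_mul, add_sub_cancel_right, sq]
  | succ k ih =>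
    have hk : (k : ℝ) + 1 + σ ≠ 0 := by positivity
    refine mul_left_cancel₀ hk ?_
    have hΓ := (Gamma_pos_of_pos (show 0 < σ + k + 1 by positivity)).ne'
    rw [cosineCoeff_add_one hσ, ← ih, rbinom, rbinom, Nat.cast_succ,
      show 2 * σ - (σ + (k + 1)) + 1 = σ - k by ring, show 2 * σ - (σ + k) + 1 = σ - k + 1 by ring,
      ← add_assoc σ, Gamma_add_one (s := σ + k + 1) (by positivity)]
    rcases eq_or_ne (σ - k) 0 with h | h
    · rw [h, ← neg_sub, h, Gamma_zero]
      simp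
    · rcases eq_or_ne (Gamma (σ - k)) 0 with hΓ' | hΓ'
      · rw [Gamma_add_one h, hΓ']
        simp
      · rw [Gamma_add_one h, pow_succ]
        have : σ + k + 1 ≠ 0 := by positivity
        field_simp
        ring

lemma Kker_add_right (hσ : 0 < σ) (m k : ℕ) :
    Kker σ m (m + k) = cosineCoeff σ k - cosineCoeff σ (k + 2 * m) := by
  have hsign : (-1 : ℝ) ^ (k + 2 * m) = (-1) ^ k := by rw [pow_add, pow_mul]; simp
  rw [Kker, ← neg_one_pow_mul_rbinom hσ, ← neg_one_pow_mul_rbinom hσ, hsign,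
    show m + (m + k) = k + 2 * m by ring, hsign, ← rbinom_sub_right (2 * σ) (σ + k)]
  push_cast
  ring_nf

lemma Kker_comm (σ : ℝ) (m n : ℕ) : Kker σ m n = Kker σ n m := by
  rw [Kker, Kker, add_comm m n, show σ + m - n = 2 * σ - (σ + n - m) by ring, rbinom_sub_right,
    add_right_comm]

lemma Kker_eq_natAbs (hσ : 0 < σ) (m n : ℕ) :
    Kker σ m n = cosineCoeff σ ((n : ℤ) - m).natAbs - cosineCoeff σ (m + n) := by
  rcases le_total m n with h | h <;> obtain ⟨k, rfl⟩ := Nat.exists_eq_add_of_le h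
  · rw [Kker_add_right hσ]
    congr 2 <;> lia
  · rw [Kker_comm, Kker_add_right hσ]
    congr 2 <;> lia

lemma Kker_nonpos (h0 : 0 < σ) (h1 : σ ≤ 1) {m n : ℕ} (hmn : m ≠ n) : Kker σ m n ≤ 0 := by
  rw [Kker_eq_natAbs h0, sub_nonpos]
  exact cosineCoeff_le_cosineCoeff h0 h1 (by lia) (by lia)

lemma neg_Kker_add_right_le (h0 : 0 < σ) (h1 : σ ≤ 1) (m : ℕ) {k : ℕ} (hk : k ≠ 0) :
    -Kker σ m (m + k) ≤ -cosineCoeff σ k := by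
  rw [Kker_add_right h0]
  linarith [cosineCoeff_nonpos h0 h1 (show k + 2 * m ≠ 0 by lia)]

lemma summable_Kker_mul_natCast (hσ : 0 < σ) (m : ℕ) : Summable fun n : ℕ ↦ Kker σ m n * n := by
  have hκ := summable_cosineCoeff hσ
  rw [← summable_nat_add_iff m]
  refine ((hκ.sub ((summable_nat_add_iff (2 * m)).mpr hκ)).mul_left (m : ℝ)).sub
    (summable_mul_cosineCoeff_add_sub hσ (2 * m)) |>.congr fun k ↦ ?_
  rw [add_comm k m, Kker_add_right hσ]
  push_cast
  ring

end Kernel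

section CosineSeries

local instance : Fact (0 < 2 * π) := ⟨two_pi_pos⟩

lemma fourier_coe_two_pi (n : ℤ) (t : ℝ) :
    fourier n (t : AddCircle (2 * π)) = Complex.exp ((n * t : ℝ) * Complex.I) := by
  have hπ : (π : ℂ) ≠ 0 := Complex.ofReal_ne_zero.mpr pi_ne_zero
  rw [fourier_coe_apply]
  congr 1
  push_cast
  field_simp

lemma exp_mul_I_add_exp_neg_mul_I (x : ℝ) :
    Complex.exp (x * Complex.I) + Complex.exp ((-x : ℝ) * Complex.I) = (2 * cos x : ℝ) := by
  rw [Complex.ofReal_neg, Complex.ofReal_mul, Complex.ofReal_cos, Complex.ofReal_ofNat,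
    Complex.two_cos]

variable {g : ℝ → ℝ}

lemma fourierCoeff_lift_of_even (hg : Continuous g) (hper : g.Periodic (2 * π)) (heven : g.Even)
    (k : ℤ) : fourierCoeff (fun x ↦ (hper.lift x : ℂ)) k =
      (1 / π * ∫ t in 0..π, g t * cos (k.natAbs * t) : ℝ) := by
  have hcont : Continuous fun t : ℝ ↦ Complex.exp ((-k * t : ℝ) * Complex.I) * g t := by fun_prop
  have hint (a b : ℝ) := hcont.intervalIntegrable (μ := volume) a b
  have hfold : ∀ t : ℝ, Complex.exp ((-k * -t : ℝ) * Complex.I) * g (-t) +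
      Complex.exp ((-k * t : ℝ) * Complex.I) * g t = (2 * (g t * cos (k.natAbs * t)) : ℝ) := by
    intro t
    have hcos : cos (k.natAbs * t) = cos (k * t) := by
      rw [← cos_abs (k * t), abs_mul, ← cos_abs (k.natAbs * t), abs_mul, Nat.abs_cast,
        Nat.cast_natAbs, Int.cast_abs]
    rw [heven t, ← add_mul, neg_mul_neg, neg_mul, exp_mul_I_add_exp_neg_mul_I, hcos,
      ← Complex.ofReal_mul]
    ring_nf
  rw [fourierCoeff_eq_intervalIntegral _ _ (-π), show -π + 2 * π = π by ring]
  simp only [fourier_coe_two_pi, Function.Periodic.lift_coe, smul_eq_mul, Int.cast_neg]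
  rw [← intervalIntegral.integral_add_adjacent_intervals (hint (-π) 0) (hint 0 π)]
  have hneg := intervalIntegral.integral_comp_neg (a := 0) (b := π)
    (fun t : ℝ ↦ Complex.exp ((-k * t : ℝ) * Complex.I) * g t)
  rw [neg_zero] at hneg
  rw [← hneg, ← intervalIntegral.integral_add
    (Continuous.intervalIntegrable (by fun_prop) _ _) (hint 0 π)]
  simp only [hfold]
  rw [intervalIntegral.integral_ofReal, intervalIntegral.integral_const_mul, Complex.real_smul,
    ← Complex.ofReal_mul]
  congr 1
  field_simp

lemma hasSum_natAbs_mul_exp (hg : Continuous g) (hper : g.Periodic (2 * π)) (heven : g.Even)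
    {a : ℕ → ℝ} (ha : ∀ k : ℕ, 1 / π * ∫ t in 0..π, g t * cos (k * t) = a k) (hsum : Summable a)
    (t : ℝ) : HasSum (fun k : ℤ ↦ a k.natAbs * Complex.exp ((k * t : ℝ) * Complex.I)) (g t) := by
  have hlift : Continuous fun x : AddCircle (2 * π) ↦ (hper.lift x : ℂ) :=
    Complex.continuous_ofReal.comp (continuous_coinduced_dom.mpr hg)
  have hcoeff : fourierCoeff (⟨_, hlift⟩ : C(AddCircle (2 * π), ℂ)) = fun k ↦ (a k.natAbs : ℂ) :=
    funext fun k ↦ (fourierCoeff_lift_of_even hg hper heven k).trans (by rw [ha])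
  have hsumℤ : Summable fun k : ℤ ↦ a k.natAbs :=
    Summable.of_nat_of_neg (by simpa using hsum) (by simpa using hsum)
  have hseries := has_pointwise_sum_fourier_series_of_summable
    (hcoeff ▸ Complex.ofRealCLM.summable hsumℤ) (t : AddCircle (2 * π))
  rw [hcoeff] at hseries
  simp only [fourier_coe_two_pi, smul_eq_mul] at hseries
  exact hseries

lemma hasSum_natAbs_sub_mul_sin (hg : Continuous g) (hper : g.Periodic (2 * π)) (heven : g.Even)
    {a : ℕ → ℝ} (ha : ∀ k : ℕ, 1 / π * ∫ t in 0..π, g t * cos (k * t) = a k) (hsum : Summable a)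
    (m : ℤ) (t : ℝ) :
    HasSum (fun n : ℤ ↦ a (n - m).natAbs * sin (n * t)) (g t * sin (m * t)) := by
  have hshift := Complex.hasSum_im <| (hasSum_natAbs_mul_exp hg hper heven ha hsum t).mul_right
    (Complex.exp ((m * t : ℝ) * Complex.I))
  rw [← (Equiv.subRight m).hasSum_iff, Complex.im_ofReal_mul, Complex.exp_ofReal_mul_I_im]
    at hshift
  refine hshift.congr_fun fun n ↦ ?_
  rw [Function.comp_apply, Equiv.subRight_apply, mul_assoc, ← Complex.exp_add, ← add_mul,
    ← Complex.ofReal_add, Complex.im_ofReal_mul, Complex.exp_ofReal_mul_I_im, ← add_mul,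
    Int.cast_sub, sub_add_cancel]

end CosineSeries

section RieszIdentity

variable {σ α : ℝ}

lemma hasSum_Kker_mul_sin (hσ : 0 < σ) (m : ℕ) (t : ℝ) :
    HasSum (fun n : ℕ ↦ Kker σ m n * sin (n * t)) (laplaceSymbol t ^ σ * sin (m * t)) := by
  have hper : Function.Periodic (fun t ↦ laplaceSymbol t ^ σ) (2 * π) := fun t ↦ by
    simp only [laplaceSymbol, cos_add_two_pi]
  have heven : Function.Even fun t ↦ laplaceSymbol t ^ σ := fun t ↦ by
    simp only [laplaceSymbol, cos_neg]
  have hℤ := (hasSum_natAbs_sub_mul_sin (continuous_laplaceSymbol_rpow hσ.le) hper heven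
    (fun _ ↦ rfl) (summable_cosineCoeff hσ) m t).nat_add_neg
  simp only [Int.cast_zero, zero_mul, sin_zero, mul_zero, add_zero, Int.cast_natCast] at hℤ
  refine hℤ.congr_fun fun n ↦ ?_
  rw [Kker_eq_natAbs hσ, show (-(n : ℤ) - m).natAbs = m + n by lia, Int.cast_neg,
    Int.cast_natCast, neg_mul, sin_neg, cosineCoeff, cosineCoeff]
  ring

lemma hasSum_Kker_mul_sineMoment (hσ : 0 < σ) (hα : α < 3 / 2) (m : ℕ) :
    HasSum (fun n ↦ Kker σ m n * sineMoment (-α) n) (sineMoment (-(α - σ)) m) := by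
  have hmeas : Measurable laplaceSymbol := continuous_laplaceSymbol.measurable
  have hint : IntervalIntegrable (fun t ↦ laplaceSymbol t ^ (-α + 1)) volume 0 π :=
    intervalIntegrable_laplaceSymbol_rpow (by linarith)
  have hsum := (summable_Kker_mul_natCast hσ m).abs
  simp only [sineMoment, ← intervalIntegral.integral_const_mul]
  refine intervalIntegral.hasSum_integral_of_dominated_convergence
    (fun n t ↦ |Kker σ m n * n| * laplaceSymbol t ^ (-α + 1))
    (fun n ↦ Measurable.aestronglyMeasurable (by fun_prop)) (fun n ↦ .of_forall fun t ht ↦ ?_)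
    (.of_forall fun t _ ↦ hsum.mul_right _) ?_ (.of_forall fun t ht ↦ ?_)
  · rw [Set.uIoc_of_le pi_pos.le] at ht
    rw [norm_mul, norm_eq_abs, norm_eq_abs, abs_mul _ (n : ℝ), Nat.abs_cast, mul_assoc]
    gcongr
    exact abs_sineMoment_integrand_le _ n ht.1 ht.2
  · simpa only [tsum_mul_right] using hint.const_mul _
  · rw [Set.uIoc_of_le pi_pos.le] at ht
    rw [show laplaceSymbol t ^ (-(α - σ)) * (sin t * sin (m * t)) =
        laplaceSymbol t ^ (-α) * sin t * (laplaceSymbol t ^ σ * sin (m * t)) by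
      rw [neg_sub, sub_eq_neg_add, rpow_add (laplaceSymbol_pos ht.1 ht.2)]
      ring]
    exact ((hasSum_Kker_mul_sin hσ m t).mul_left _).congr_fun fun n ↦ by ring

lemma hasSum_Kker_mul_Riesz (h0 : 0 < σ) (h1 : σ < α) (h2 : α < 3 / 2) (m : ℕ) :
    HasSum (fun n ↦ Kker σ m n * Riesz α n) (Riesz (α - σ) m) := by
  have hc : √(π / 2) ≠ 0 := by positivity
  have hmoment := (hasSum_Kker_mul_sineMoment h0 h2 m).mul_left (√(π / 2))⁻¹
  simp only [sineMoment_neg (h0.trans h1) h2, sineMoment_neg (sub_pos.mpr h1) (by linarith),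
    mul_left_comm (Kker _ _ _) √(π / 2), inv_mul_cancel_left₀ hc] at hmoment
  exact hmoment

end RieszIdentity

section GroundState

variable {ι : Type*} (K : ι → ι → ℝ) (h ψ : ι → ℝ)

/-- The energy of `ψ` on the finite set `T` for the kernel `-K` weighted by the ground state `h`,
that is, the right-hand side of the ground state representation of the quadratic form of `K`. -/
noncomputable def groundStateEnergy (T : Finset ι) : ℝ :=
  1 / 2 * ∑ m ∈ T, ∑ n ∈ T, -K m n * (h m * h n) * (ψ m - ψ n) ^ 2

variable {K h ψ}

lemma groundStateEnergy_eq_sub (hK : ∀ m n, K m n = K n m) (T : Finset ι) :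
    groundStateEnergy K h ψ T = ∑ m ∈ T, ∑ n ∈ T, K m n * (h m * ψ m) * (h n * ψ n) -
      ∑ m ∈ T, h m * ψ m ^ 2 * ∑ n ∈ T, K m n * h n := by
  have hswap : ∑ m ∈ T, ∑ n ∈ T, K m n * (h m * h n) * ψ n ^ 2 =
      ∑ m ∈ T, ∑ n ∈ T, K m n * (h m * h n) * ψ m ^ 2 := by
    rw [Finset.sum_comm]
    refine Finset.sum_congr rfl fun m _ ↦ Finset.sum_congr rfl fun n _ ↦ ?_
    rw [hK n m, mul_comm (h n)]
  have hdiag : ∑ m ∈ T, h m * ψ m ^ 2 * ∑ n ∈ T, K m n * h n =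
      1 / 2 * (∑ m ∈ T, ∑ n ∈ T, K m n * (h m * h n) * ψ m ^ 2 +
        ∑ m ∈ T, ∑ n ∈ T, K m n * (h m * h n) * ψ n ^ 2) := by
    rw [hswap, ← two_mul, one_div, inv_mul_cancel_left₀ two_ne_zero]
    refine Finset.sum_congr rfl fun m _ ↦ ?_
    rw [Finset.mul_sum]
    exact Finset.sum_congr rfl fun n _ ↦ by ring
  rw [groundStateEnergy, hdiag]
  simp only [Finset.mul_sum, ← Finset.sum_add_distrib, ← Finset.sum_sub_distrib]
  exact Finset.sum_congr rfl fun m _ ↦ Finset.sum_congr rfl fun n _ ↦ by ring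

/-- The ground state representation: the form of `K` minus the weight `w` is the limiting energy,
for any solution `h` of `K h = w h`. -/
lemma tendsto_groundStateEnergy (hK : ∀ m n, K m n = K n m) {w : ι → ℝ} {S : Finset ι}
    (hS : ∀ m ∉ S, h m * ψ m = 0) (hw : ∀ m ∈ S, HasSum (fun n ↦ K m n * h n) (w m * h m)) :
    Tendsto (groundStateEnergy K h ψ) atTop
      (𝓝 (∑ m ∈ S, ∑ n ∈ S, K m n * (h m * ψ m) * (h n * ψ n) -
        ∑ m ∈ S, w m * (h m * ψ m) ^ 2)) := by
  have hlim : Tendsto (fun T : Finset ι ↦ ∑ m ∈ S, h m * ψ m ^ 2 * ∑ n ∈ T, K m n * h n) atTop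
      (𝓝 (∑ m ∈ S, h m * ψ m ^ 2 * (w m * h m))) :=
    tendsto_finsetSum S fun m hm ↦ Tendsto.const_mul _ (hw m hm)
  rw [show ∑ m ∈ S, w m * (h m * ψ m) ^ 2 = ∑ m ∈ S, h m * ψ m ^ 2 * (w m * h m) from
    Finset.sum_congr rfl fun m _ ↦ by ring]
  refine (hlim.const_sub _).congr' ?_
  filter_upwards [eventually_ge_atTop S] with T hST
  rw [groundStateEnergy_eq_sub hK]
  congr 1
  · rw [← Finset.sum_subset hST fun m _ hm ↦ by simp only [hS m hm, mul_zero, zero_mul,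
      Finset.sum_const_zero]]
    exact Finset.sum_congr rfl fun m _ ↦
      Finset.sum_subset hST fun n _ hn ↦ by rw [hS n hn, mul_zero]
  · exact Finset.sum_subset hST fun m _ hm ↦ by rw [sq, ← mul_assoc, hS m hm, zero_mul, zero_mul]

lemma groundStateEnergy_nonneg (hK : ∀ m n, m ≠ n → K m n ≤ 0) (hh : ∀ n, 0 ≤ h n)
    (T : Finset ι) : 0 ≤ groundStateEnergy K h ψ T := by
  refine mul_nonneg (by norm_num) (Finset.sum_nonneg fun m _ ↦ Finset.sum_nonneg fun n _ ↦ ?_)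
  rcases eq_or_ne m n with rfl | hmn
  · simp
  · exact mul_nonneg (mul_nonneg (neg_nonneg.mpr (hK m n hmn)) (mul_nonneg (hh m) (hh n)))
      (sq_nonneg _)

end GroundState

section Hardy

variable {σ α : ℝ}

lemma Qform_eq_sum (σ : ℝ) {f : ℕ → ℝ} {S : Finset ℕ} (hS : ∀ n ∉ S, f n = 0) :
    Qform σ f = ∑ m ∈ S, ∑ n ∈ S, Kker σ m n * f m * f n := by
  have hrow (m : ℕ) : ∑' n, Kker σ m n * f m * f n = ∑ n ∈ S, Kker σ m n * f m * f n :=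
    tsum_eq_sum fun n hn ↦ by rw [hS n hn, mul_zero]
  simp only [Qform, hrow]
  exact tsum_eq_sum fun m hm ↦ Finset.sum_eq_zero fun n _ ↦ by rw [hS m hm, mul_zero, zero_mul]

lemma tendsto_groundStateEnergy_Kker (h0 : 0 < σ) (h1 : σ < α) (h2 : α < 3 / 2) {ψ : ℕ → ℝ}
    (hψ : (fun n ↦ Riesz α n * ψ n).support.Finite) :
    Tendsto (groundStateEnergy (Kker σ) (Riesz α) ψ) atTop
      (𝓝 (Qform σ (fun n ↦ Riesz α n * ψ n) -
        ∑' n, Wweight σ α n * (Riesz α n * ψ n) ^ 2)) := by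
  have hS : ∀ n ∉ hψ.toFinset, Riesz α n * ψ n = 0 := fun n hn ↦ by
    simpa only [Set.Finite.mem_toFinset, Function.mem_support, not_not] using hn
  rw [Qform_eq_sum σ hS, tsum_eq_sum fun n hn ↦ by rw [hS n hn, sq, mul_zero, mul_zero]]
  refine tendsto_groundStateEnergy (Kker_comm σ) hS fun m _ ↦ ?_
  rw [Wweight_mul_Riesz σ (h0.trans h1) h2]
  exact hasSum_Kker_mul_Riesz h0 h1 h2 m

/-- `W` is a Hardy-weight for `(-Δ_ℕ)^σ`. Functions on `{1, 2, …}` are encoded as functions on `ℕ`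
vanishing at `0`. -/
def IsHardyWeight (σ : ℝ) (W : ℕ → ℝ) : Prop :=
  ∀ f : ℕ → ℝ, f 0 = 0 → (Function.support f).Finite → ∑' n : ℕ, W n * f n ^ 2 ≤ Qform σ f

theorem isHardyWeight_Wweight (h0 : 0 < σ) (h1 : σ ≤ 1) (hσα : σ < α) (hα : α < 3 / 2) :
    IsHardyWeight σ (Wweight σ α) := by
  intro f hf0 hf
  have hRf (n : ℕ) : Riesz α n * (f n / Riesz α n) = f n := by
    rcases eq_or_ne n 0 with rfl | hn
    · rw [Riesz_zero_right, zero_mul, hf0]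
    · exact mul_div_cancel₀ _ (Riesz_pos (h0.trans hσα) hα hn).ne'
  have hlim := tendsto_groundStateEnergy_Kker h0 hσα hα (ψ := fun n ↦ f n / Riesz α n)
    (by simpa only [hRf])
  simp only [hRf] at hlim
  exact sub_nonneg.mp (ge_of_tendsto' hlim fun T ↦ groundStateEnergy_nonneg
    (fun _ _ ↦ Kker_nonpos h0 h1) (Riesz_nonneg (h0.trans hσα) hα) T)

end Hardy

section LogarithmicSums

lemma sum_Ioc_rpow_le {s : ℝ} (hs : 0 < s) {m : ℕ} (hm : m ≠ 0) (n : ℕ) :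
    ∑ k ∈ Finset.Ioc m n, (k : ℝ) ^ (-1 - s) ≤ (m : ℝ) ^ (-s) / s := by
  have hm0 : (0 : ℝ) < m := mod_cast hm.bot_lt
  rcases le_total m n with hmn | hnm
  · have hmn' : (m : ℝ) ≤ n := mod_cast hmn
    have hanti : AntitoneOn (fun x : ℝ ↦ x ^ (-1 - s)) (Set.Icc m n) :=
      (antitoneOn_rpow_Ioi_of_exponent_nonpos (by linarith)).mono fun x hx ↦ hm0.trans_le hx.1
    have hexp : -1 - s + 1 = -s := by ring
    have h0 : (0 : ℝ) ∉ Set.uIcc (m : ℝ) n := by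
      rw [Set.uIcc_of_le hmn']
      exact fun h ↦ hm0.not_ge h.1
    rw [← Finset.Ico_add_one_add_one_eq_Ioc,
      ← Finset.sum_Ico_add' (fun k : ℕ ↦ (k : ℝ) ^ (-1 - s))]
    refine (hanti.sum_le_integral_Ico hmn).trans ?_
    rw [integral_rpow (Or.inr ⟨by linarith, h0⟩), hexp, div_neg, ← neg_div, neg_sub]
    gcongr
    exact sub_le_self _ (by positivity)
  · rw [Finset.Ioc_eq_empty_of_le hnm, Finset.sum_empty]
    positivity

lemma rpow_le_two_rpow_abs_mul_rpow {x y : ℝ} (hx : 0 < x) (hxy : x ≤ y) (hyx : y ≤ 2 * x)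
    (b : ℝ) : y ^ b ≤ 2 ^ |b| * x ^ b := by
  have h1 : 1 ≤ y / x := (one_le_div hx).mpr hxy
  calc y ^ b = (y / x) ^ b * x ^ b := by
        rw [← mul_rpow (by linarith) hx.le, div_mul_cancel₀ _ hx.ne']
    _ ≤ (y / x) ^ |b| * x ^ b := by gcongr; exact le_abs_self b
    _ ≤ 2 ^ |b| * x ^ b := by gcongr; exact (div_le_iff₀ hx).mpr hyx

lemma rpow_mul_log_sq_le_of_le {x y : ℝ} (hx : 0 < x) (hy : 0 ≤ y) (hyx : y ≤ x) (β : ℝ) :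
    (x + y) ^ β * log (1 + y / x) ^ 2 ≤ 2 ^ |β| * x ^ (β - 2) * y ^ 2 := by
  have hlog0 : 0 ≤ log (1 + y / x) := log_nonneg (le_add_of_nonneg_right (by positivity))
  have hlog : log (1 + y / x) ≤ y / x := by
    linarith [log_le_sub_one_of_pos (show 0 < 1 + y / x by positivity)]
  calc (x + y) ^ β * log (1 + y / x) ^ 2 ≤ 2 ^ |β| * x ^ β * (y / x) ^ 2 := by
        gcongr
        exact rpow_le_two_rpow_abs_mul_rpow hx (by linarith) (by linarith) β
    _ = 2 ^ |β| * x ^ (β - 2) * y ^ 2 := by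
        rw [rpow_sub hx, rpow_two]
        ring

lemma rpow_mul_log_sq_le_of_ge {x y δ : ℝ} (hx : 0 < x) (hxy : x ≤ y) (hδ : 0 < δ) (β : ℝ) :
    (x + y) ^ β * log (1 + y / x) ^ 2 ≤
      2 ^ |β + δ| * (2 / δ) ^ 2 * x ^ (-δ) * y ^ (β + δ) := by
  have hy : 0 < y := hx.trans_le hxy
  have hlog0 : 0 ≤ log (1 + y / x) := log_nonneg (le_add_of_nonneg_right (by positivity))
  have hlog : log (1 + y / x) ^ 2 ≤ (2 / δ) ^ 2 * (x + y) ^ δ * x ^ (-δ) := by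
    rw [one_add_div hx.ne'] at hlog0 ⊢
    calc log ((x + y) / x) ^ 2 ≤ (((x + y) / x) ^ (δ / 2) / (δ / 2)) ^ 2 := by
          gcongr
          exact log_le_rpow_div (by positivity) (by positivity)
      _ = (2 / δ) ^ 2 * ((x + y) / x) ^ δ := by
          rw [div_pow, ← rpow_mul_natCast (by positivity), Nat.cast_two,
            div_mul_cancel₀ _ two_ne_zero]
          ring
      _ = (2 / δ) ^ 2 * (x + y) ^ δ * x ^ (-δ) := by
          rw [div_rpow (by positivity) hx.le, rpow_neg hx.le]
          ring
  calc (x + y) ^ β * log (1 + y / x) ^ 2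
      ≤ (x + y) ^ β * ((2 / δ) ^ 2 * (x + y) ^ δ * x ^ (-δ)) := by gcongr
    _ = (x + y) ^ (β + δ) * ((2 / δ) ^ 2 * x ^ (-δ)) := by
        rw [rpow_add (by positivity)]
        ring
    _ ≤ 2 ^ |β + δ| * y ^ (β + δ) * ((2 / δ) ^ 2 * x ^ (-δ)) := by
        gcongr
        exact rpow_le_two_rpow_abs_mul_rpow hy (by linarith) (by linarith) _
    _ = 2 ^ |β + δ| * (2 / δ) ^ 2 * x ^ (-δ) * y ^ (β + δ) := by ring

end LogarithmicSums

section CosineCoeffMoments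

variable {σ : ℝ}

lemma sum_sq_mul_cosineCoeff (hσ : 0 < σ) (m : ℕ) :
    2 * (1 - σ) * ∑ k ∈ Finset.Ioc 0 m, (k : ℝ) ^ 2 * cosineCoeff σ k =
      (m - σ) * m * (m + 1) * cosineCoeff σ m := by
  induction m with
  | zero => simp
  | succ m ih =>
    rw [Finset.sum_Ioc_succ_top m.zero_le, mul_add, ih]
    push_cast
    linear_combination -(m * (m + 1) : ℝ) * cosineCoeff_add_one hσ m

lemma cosineCoeff_one_add_two (k : ℕ) : cosineCoeff 1 (k + 2) = 0 := by
  have hrec (k : ℕ) := cosineCoeff_add_one one_pos (σ := 1) (k + 1)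
  have hpos (k : ℕ) : ((k + 1 : ℕ) : ℝ) + 1 + 1 ≠ 0 := by positivity
  induction k with
  | zero => exact (mul_eq_zero.mp ((hrec 0).trans (by simp))).resolve_left (hpos 0)
  | succ k ih =>
    exact (mul_eq_zero.mp ((hrec (k + 1)).trans (by rw [ih, mul_zero]))).resolve_left (hpos (k + 1))

lemma exists_sum_sq_mul_neg_cosineCoeff_le (h0 : 0 < σ) (h1 : σ ≤ 1) :
    ∃ C > 0, ∀ m : ℕ, m ≠ 0 →
      ∑ k ∈ Finset.Ioc 0 m, (k : ℝ) ^ 2 * -cosineCoeff σ k ≤ C * (m : ℝ) ^ (2 - 2 * σ) := by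
  rcases h1.lt_or_eq with h1 | rfl
  · obtain ⟨C, hC, hκ⟩ := exists_neg_cosineCoeff_le h0
    have : 0 < 1 - σ := sub_pos.mpr h1
    refine ⟨C / (1 - σ), by positivity, fun m hm ↦ ?_⟩
    have hm1 : (1 : ℝ) ≤ m := mod_cast hm.bot_lt
    have hmoment : 2 * (1 - σ) * ∑ k ∈ Finset.Ioc 0 m, (k : ℝ) ^ 2 * -cosineCoeff σ k =
        (m - σ) * m * (m + 1) * -cosineCoeff σ m := by
      simp only [mul_neg, Finset.sum_neg_distrib, sum_sq_mul_cosineCoeff h0 m]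
    refine le_of_mul_le_mul_left ?_ (show 0 < 2 * (1 - σ) by positivity)
    calc 2 * (1 - σ) * ∑ k ∈ Finset.Ioc 0 m, (k : ℝ) ^ 2 * -cosineCoeff σ k
        ≤ m * m * (m + m) * (C * (m : ℝ) ^ (-(1 + 2 * σ))) := by
          rw [hmoment]
          have := cosineCoeff_nonpos h0 h1.le hm
          gcongr
          exacts [by linarith, by linarith, hκ m hm]
      _ = 2 * C * ((m : ℝ) ^ (3 : ℝ) * (m : ℝ) ^ (-(1 + 2 * σ))) := by
          rw [show (3 : ℝ) = (3 : ℕ) by norm_num, rpow_natCast]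
          ring
      _ = 2 * (1 - σ) * (C / (1 - σ) * (m : ℝ) ^ (2 - 2 * σ)) := by
          rw [← rpow_add (by linarith), show (3 : ℝ) + -(1 + 2 * σ) = 2 - 2 * σ by ring]
          field_simp
  · refine ⟨1 - cosineCoeff 1 1, by linarith [cosineCoeff_nonpos h0 h1 one_ne_zero],
      fun m hm ↦ ?_⟩
    rw [Finset.sum_eq_single_of_mem 1 (Finset.mem_Ioc.mpr ⟨one_pos, hm.bot_lt⟩)]
    · simp
    · intro k hk hk1
      obtain ⟨j, rfl⟩ := Nat.exists_eq_add_of_le' (show 2 ≤ k by have := Finset.mem_Ioc.mp hk; lia)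
      rw [cosineCoeff_one_add_two, neg_zero, mul_zero]

lemma exists_sum_Ioc_neg_cosineCoeff_mul_near_le (h0 : 0 < σ) (h1 : σ ≤ 1) (β : ℝ) :
    ∃ C > 0, ∀ m : ℕ, m ≠ 0 → ∑ k ∈ Finset.Ioc 0 m,
      -cosineCoeff σ k * ((m + k : ℝ) ^ β * log (1 + k / m) ^ 2) ≤
        C * (m : ℝ) ^ (β - 2 * σ) := by
  obtain ⟨C, hC, hmoment⟩ := exists_sum_sq_mul_neg_cosineCoeff_le h0 h1
  refine ⟨2 ^ |β| * C, by positivity, fun m hm ↦ ?_⟩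
  have hm0 : (0 : ℝ) < m := mod_cast hm.bot_lt
  calc ∑ k ∈ Finset.Ioc 0 m, -cosineCoeff σ k * ((m + k : ℝ) ^ β * log (1 + k / m) ^ 2)
      ≤ ∑ k ∈ Finset.Ioc 0 m, 2 ^ |β| * (m : ℝ) ^ (β - 2) * ((k : ℝ) ^ 2 * -cosineCoeff σ k) := by
        refine Finset.sum_le_sum fun k hk ↦ ?_
        obtain ⟨hk0, hkm⟩ := Finset.mem_Ioc.mp hk
        have hκ := neg_nonneg.mpr (cosineCoeff_nonpos h0 h1 hk0.ne')
        refine (mul_le_mul_of_nonneg_left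
          (rpow_mul_log_sq_le_of_le hm0 k.cast_nonneg (mod_cast hkm) β) hκ).trans_eq ?_
        ring
    _ ≤ 2 ^ |β| * (m : ℝ) ^ (β - 2) * (C * (m : ℝ) ^ (2 - 2 * σ)) := by
        rw [← Finset.mul_sum]
        gcongr
        exact hmoment m hm
    _ = 2 ^ |β| * C * (m : ℝ) ^ (β - 2 * σ) := by
        rw [show β - 2 * σ = (β - 2) + (2 - 2 * σ) by ring, rpow_add hm0]
        ring

lemma exists_sum_Ioc_neg_cosineCoeff_mul_far_le (h0 : 0 < σ) {β : ℝ} (hβ : β < 2 * σ) :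
    ∃ C > 0, ∀ m : ℕ, m ≠ 0 → ∀ n, ∑ k ∈ Finset.Ioc m n,
      -cosineCoeff σ k * ((m + k : ℝ) ^ β * log (1 + k / m) ^ 2) ≤
        C * (m : ℝ) ^ (β - 2 * σ) := by
  obtain ⟨C, hC, hκ⟩ := exists_neg_cosineCoeff_le h0
  set δ := (2 * σ - β) / 2 with hδ_def
  have hδ : 0 < δ := by linarith
  set D := 2 ^ |β + δ| * (2 / δ) ^ 2
  refine ⟨C * D / δ, by positivity, fun m hm n ↦ ?_⟩
  have hm0 : (0 : ℝ) < m := mod_cast hm.bot_lt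
  calc ∑ k ∈ Finset.Ioc m n, -cosineCoeff σ k * ((m + k : ℝ) ^ β * log (1 + k / m) ^ 2)
      ≤ ∑ k ∈ Finset.Ioc m n, C * D * (m : ℝ) ^ (-δ) * (k : ℝ) ^ (-1 - δ) := by
        refine Finset.sum_le_sum fun k hk ↦ ?_
        have hmk := (Finset.mem_Ioc.mp hk).1
        have hk0 : (0 : ℝ) < k := hm0.trans (mod_cast hmk)
        calc -cosineCoeff σ k * ((m + k : ℝ) ^ β * log (1 + k / m) ^ 2)
            ≤ C * (k : ℝ) ^ (-(1 + 2 * σ)) * (D * (m : ℝ) ^ (-δ) * (k : ℝ) ^ (β + δ)) := by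
              exact mul_le_mul (hκ k (by lia))
                (rpow_mul_log_sq_le_of_ge hm0 (mod_cast hmk.le) hδ β)
                (by positivity) (by positivity)
          _ = C * D * (m : ℝ) ^ (-δ) * (k : ℝ) ^ (-1 - δ) := by
              rw [show -1 - δ = -(1 + 2 * σ) + (β + δ) by rw [hδ_def]; ring,
                rpow_add hk0 _ (β + δ)]
              ring
    _ ≤ C * D * (m : ℝ) ^ (-δ) * ((m : ℝ) ^ (-δ) / δ) := by
        rw [← Finset.mul_sum]
        gcongr
        exact sum_Ioc_rpow_le hδ hm n
    _ = C * D / δ * (m : ℝ) ^ (β - 2 * σ) := by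
        rw [show β - 2 * σ = -δ + -δ by rw [hδ_def]; ring, rpow_add hm0]
        ring

lemma exists_sum_Ioc_neg_cosineCoeff_mul_le (h0 : 0 < σ) (h1 : σ ≤ 1) {β : ℝ} (hβ : β < 2 * σ) :
    ∃ C > 0, ∀ m : ℕ, m ≠ 0 → ∀ n, ∑ k ∈ Finset.Ioc 0 n,
      -cosineCoeff σ k * ((m + k : ℝ) ^ β * log (1 + k / m) ^ 2) ≤
        C * (m : ℝ) ^ (β - 2 * σ) := by
  obtain ⟨C₁, hC₁, hnear⟩ := exists_sum_Ioc_neg_cosineCoeff_mul_near_le h0 h1 β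
  obtain ⟨C₂, hC₂, hfar⟩ := exists_sum_Ioc_neg_cosineCoeff_mul_far_le h0 hβ
  refine ⟨C₁ + C₂, by positivity, fun m hm n ↦ ?_⟩
  rw [add_mul]
  refine le_trans ?_ (add_le_add (hnear m hm) (hfar m hm (m + n)))
  rw [Finset.sum_Ioc_consecutive _ m.zero_le (Nat.le_add_right m n)]
  refine Finset.sum_le_sum_of_subset_of_nonneg
    (Finset.Ioc_subset_Ioc_right (Nat.le_add_left n m)) fun k hk _ ↦ ?_
  exact mul_nonneg (neg_nonneg.mpr (cosineCoeff_nonpos h0 h1 (Finset.mem_Ioc.mp hk).1.ne'))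
    (by positivity)

end CosineCoeffMoments

section EnergyOnInitialSegments

variable {K : ℕ → ℕ → ℝ} {h ψ : ℕ → ℝ}

lemma groundStateEnergy_range (hK : ∀ m n, K m n = K n m) (N : ℕ) :
    groundStateEnergy K h ψ (Finset.range N) = ∑ m ∈ Finset.range N,
      ∑ n ∈ Finset.Ico (m + 1) N, -K m n * (h m * h n) * (ψ m - ψ n) ^ 2 := by
  set F : ℕ → ℕ → ℝ := fun m n ↦ -K m n * (h m * h n) * (ψ m - ψ n) ^ 2 with hF
  have hsymm (m n : ℕ) : F m n = F n m := by
    simp only [hF, hK m n]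
    ring
  have hsplit : ∀ m ∈ Finset.range N, ∑ n ∈ Finset.range N, F m n =
      ∑ n ∈ Finset.Ico 0 m, F n m + ∑ n ∈ Finset.Ico (m + 1) N, F m n := fun m hm ↦ by
    have hmN := Finset.mem_range.mp hm
    rw [Finset.range_eq_Ico, ← Finset.sum_Ico_consecutive _ m.zero_le hmN.le,
      Finset.sum_eq_sum_Ico_succ_bot hmN, show F m m = 0 by simp [hF], zero_add]
    simp only [hsymm m]
  have hswap := Finset.sum_Ico_Ico_comm' 0 N F
  rw [← Finset.range_eq_Ico] at hswap
  rw [groundStateEnergy, Finset.sum_congr rfl hsplit, Finset.sum_add_distrib, ← hswap, ← two_mul,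
    one_div, inv_mul_cancel_left₀ two_ne_zero]

end EnergyOnInitialSegments

section TruncatedPower

variable {ε : ℝ}

/-- The test function `n ↦ (n ^ (-ε) - 1/2)₊`, a finitely supported function that tends to the
constant `1/2` as `ε → 0`. -/
noncomputable def truncatedPower (ε : ℝ) (n : ℕ) : ℝ :=
  max ((n : ℝ) ^ (-ε) - 1 / 2) 0

lemma finite_support_truncatedPower (hε : 0 < ε) : (truncatedPower ε).support.Finite := by
  have hlim : Tendsto (fun n : ℕ ↦ (n : ℝ) ^ (-ε)) atTop (𝓝 0) :=
    (tendsto_rpow_neg_atTop hε).comp tendsto_natCast_atTop_atTop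
  have hsmall : ∀ᶠ n : ℕ in cofinite, (n : ℝ) ^ (-ε) < 1 / 2 := by
    rw [Nat.cofinite_eq_atTop]
    exact hlim.eventually_lt_const one_half_pos
  exact hsmall.subset fun n hn hlt ↦ hn (max_eq_right (sub_nonpos.mpr (le_of_lt hlt)))

lemma tendsto_truncatedPower {n : ℕ} (hn : n ≠ 0) :
    Tendsto (fun ε ↦ truncatedPower ε n) (𝓝 0) (𝓝 (1 / 2)) := by
  have hn' : (n : ℝ) ≠ 0 := Nat.cast_ne_zero.mpr hn
  have hcont : Continuous fun ε ↦ truncatedPower ε n := by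
    unfold truncatedPower
    fun_prop (disch := assumption)
  have hzero : truncatedPower 0 n = 1 / 2 := by
    rw [truncatedPower, neg_zero, rpow_zero]
    norm_num
  simpa only [hzero] using hcont.tendsto 0

lemma abs_truncatedPower_sub_le (hε : 0 ≤ ε) {m : ℕ} (hm : m ≠ 0) (k : ℕ) :
    |truncatedPower ε m - truncatedPower ε (m + k)| ≤ ε * (m : ℝ) ^ (-ε) * log (1 + k / m) := by
  have hm0 : (0 : ℝ) < m := mod_cast hm.bot_lt
  have hanti : ((m + k : ℕ) : ℝ) ^ (-ε) ≤ (m : ℝ) ^ (-ε) :=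
    rpow_le_rpow_of_nonpos hm0 (mod_cast Nat.le_add_right m k) (neg_nonpos.mpr hε)
  have hexp : 1 - ε * log (1 + k / m) ≤ (1 + k / m : ℝ) ^ (-ε) := by
    rw [rpow_def_of_pos (by positivity)]
    linarith [add_one_le_exp (log (1 + (k : ℝ) / m) * -ε)]
  calc |truncatedPower ε m - truncatedPower ε (m + k)|
      ≤ |((m : ℝ) ^ (-ε) - 1 / 2) - (((m + k : ℕ) : ℝ) ^ (-ε) - 1 / 2)| :=
        abs_max_sub_max_le_abs _ _ _
    _ = (m : ℝ) ^ (-ε) - (m : ℝ) ^ (-ε) * (1 + k / m : ℝ) ^ (-ε) := by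
        rw [sub_sub_sub_cancel_right, abs_of_nonneg (sub_nonneg.mpr hanti),
          ← mul_rpow hm0.le (by positivity), Nat.cast_add, mul_one_add, mul_div_cancel₀ _ hm0.ne']
    _ ≤ (m : ℝ) ^ (-ε) - (m : ℝ) ^ (-ε) * (1 - ε * log (1 + k / m)) := by gcongr
    _ = ε * (m : ℝ) ^ (-ε) * log (1 + k / m) := by ring

end TruncatedPower

section EnergyBound

variable {σ α : ℝ}

lemma sum_Ico_add_one_eq_sum_Ioc {M : Type*} [AddCommMonoid M] (F : ℕ → M) (m N : ℕ) :
    ∑ n ∈ Finset.Ico (m + 1) N, F n = ∑ k ∈ Finset.Ioc 0 (N - 1 - m), F (m + k) := by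
  refine Finset.sum_nbij' (· - m) (m + ·) ?_ ?_ ?_ ?_ ?_ <;>
    simp only [Finset.mem_Ico, Finset.mem_Ioc] <;> intro n hn
  · lia
  · lia
  · lia
  · lia
  · rw [Nat.add_sub_cancel' (by lia)]

lemma exists_sum_Kker_mul_sub_sq_le (h0 : 0 < σ) (h1 : σ ≤ 1) (hα0 : 0 < α) (hα : α < 3 / 2)
    (hασ : α < 1 + σ) :
    ∃ C > 0, ∀ (ψ : ℕ → ℝ) (δ : ℝ) (m : ℕ), m ≠ 0 →
      (∀ k : ℕ, |ψ m - ψ (m + k)| ≤ δ * log (1 + k / m)) → ∀ N,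
      ∑ n ∈ Finset.Ico (m + 1) N, -Kker σ m n * (Riesz α m * Riesz α n) * (ψ m - ψ n) ^ 2 ≤
        C * δ ^ 2 * (m : ℝ) ^ (4 * α - 4 - 2 * σ) := by
  obtain ⟨A, hA, hRiesz⟩ := exists_Riesz_le α
  obtain ⟨B, hB, hsum⟩ := exists_sum_Ioc_neg_cosineCoeff_mul_le h0 h1
    (show 2 * α - 2 < 2 * σ by linarith)
  refine ⟨A ^ 2 * B, by positivity, fun ψ δ m hm hψ N ↦ ?_⟩
  have hm0 : (0 : ℝ) < m := mod_cast hm.bot_lt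
  set β := 2 * α - 2 with hβ
  have hterm : ∀ k ∈ Finset.Ioc 0 (N - 1 - m),
      -Kker σ m (m + k) * (Riesz α m * Riesz α (m + k)) * (ψ m - ψ (m + k)) ^ 2 ≤
        A ^ 2 * δ ^ 2 * (m : ℝ) ^ β *
          (-cosineCoeff σ k * ((m + k : ℝ) ^ β * log (1 + k / m) ^ 2)) := fun k hk ↦ by
    have hk0 : k ≠ 0 := (Finset.mem_Ioc.mp hk).1.ne'
    have hκ := neg_nonneg.mpr (cosineCoeff_nonpos h0 h1 hk0)
    have hRm := Riesz_nonneg hα0 hα m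
    have hRk := Riesz_nonneg hα0 hα (m + k)
    calc -Kker σ m (m + k) * (Riesz α m * Riesz α (m + k)) * (ψ m - ψ (m + k)) ^ 2
        ≤ -cosineCoeff σ k * (A * (m : ℝ) ^ β * (A * ((m + k : ℕ) : ℝ) ^ β)) *
            (δ * log (1 + k / m)) ^ 2 := by
          gcongr ?_ * (?_ * ?_) * ?_
          exacts [neg_Kker_add_right_le h0 h1 m hk0, hRiesz m hm, hRiesz (m + k) (by lia),
            sq_le_sq' (abs_le.mp (hψ k)).1 (abs_le.mp (hψ k)).2]
      _ = _ := by
          push_cast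
          ring
  calc ∑ n ∈ Finset.Ico (m + 1) N, -Kker σ m n * (Riesz α m * Riesz α n) * (ψ m - ψ n) ^ 2
      = ∑ k ∈ Finset.Ioc 0 (N - 1 - m),
          -Kker σ m (m + k) * (Riesz α m * Riesz α (m + k)) * (ψ m - ψ (m + k)) ^ 2 :=
        sum_Ico_add_one_eq_sum_Ioc _ m N
    _ ≤ A ^ 2 * δ ^ 2 * (m : ℝ) ^ β * (B * (m : ℝ) ^ (β - 2 * σ)) := by
        refine (Finset.sum_le_sum hterm).trans ?_
        rw [← Finset.mul_sum]
        gcongr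
        exact hsum m hm _
    _ = A ^ 2 * B * δ ^ 2 * (m : ℝ) ^ (4 * α - 4 - 2 * σ) := by
        rw [show 4 * α - 4 - 2 * σ = β + (β - 2 * σ) by rw [hβ]; ring, rpow_add hm0]
        ring

lemma sum_range_rpow_le {s : ℝ} (hs : 0 < s) (N : ℕ) :
    ∑ m ∈ Finset.range N, (m : ℝ) ^ (-1 - s) ≤ 1 + 1 / s := by
  have hsub : Finset.range N ⊆ insert 0 (insert 1 (Finset.Ioc 1 N)) := fun m hm ↦ by
    simp only [Finset.mem_insert, Finset.mem_Ioc]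
    have := Finset.mem_range.mp hm
    lia
  refine (Finset.sum_le_sum_of_subset_of_nonneg hsub fun m _ _ ↦ by positivity).trans ?_
  rw [Finset.sum_insert (by simp), Finset.sum_insert (by simp), Nat.cast_zero,
    zero_rpow (by linarith), zero_add, Nat.cast_one, one_rpow]
  simpa using sum_Ioc_rpow_le hs one_ne_zero N

lemma exists_groundStateEnergy_truncatedPower_le (h0 : 0 < σ) (h1 : σ ≤ 1) (hσα : σ < α)
    (hcrit : α ≤ (3 + 2 * σ) / 4) :
    ∃ C, ∀ ε, 0 < ε → ε ≤ 1 → ∀ N,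
      groundStateEnergy (Kker σ) (Riesz α) (truncatedPower ε) (Finset.range N) ≤ C * ε := by
  obtain ⟨C, hC, hrow⟩ :=
    exists_sum_Kker_mul_sub_sq_le h0 h1 (h0.trans hσα) (by linarith) (by linarith)
  refine ⟨2 * C, fun ε hε hε1 N ↦ ?_⟩
  have hrow' (m : ℕ) : ∑ n ∈ Finset.Ico (m + 1) N, -Kker σ m n * (Riesz α m * Riesz α n) *
      (truncatedPower ε m - truncatedPower ε n) ^ 2 ≤ C * ε ^ 2 * (m : ℝ) ^ (-1 - 2 * ε) := by
    rcases eq_or_ne m 0 with rfl | hm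
    · simpa [Riesz_zero_right] using by positivity
    · have hm1 : (1 : ℝ) ≤ m := mod_cast hm.bot_lt
      calc _ ≤ C * (ε * (m : ℝ) ^ (-ε)) ^ 2 * (m : ℝ) ^ (4 * α - 4 - 2 * σ) :=
            hrow _ _ m hm (abs_truncatedPower_sub_le hε.le hm) N
        _ = C * ε ^ 2 * (m : ℝ) ^ (-ε * 2 + (4 * α - 4 - 2 * σ)) := by
            rw [rpow_add (by linarith), rpow_mul (by linarith), rpow_two]
            ring
        _ ≤ C * ε ^ 2 * (m : ℝ) ^ (-1 - 2 * ε) := by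
            gcongr
            linarith
  calc groundStateEnergy (Kker σ) (Riesz α) (truncatedPower ε) (Finset.range N)
      ≤ C * ε ^ 2 * ∑ m ∈ Finset.range N, (m : ℝ) ^ (-1 - 2 * ε) := by
        rw [groundStateEnergy_range (Kker_comm σ), Finset.mul_sum]
        exact Finset.sum_le_sum fun m _ ↦ hrow' m
    _ ≤ C * ε ^ 2 * (1 + 1 / (2 * ε)) := by
        gcongr
        exact sum_range_rpow_le (by positivity) N
    _ = C * ε * (ε + 1 / 2) := by field_simp
    _ ≤ 2 * C * ε := by nlinarith [mul_pos hC hε]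

end EnergyBound

section Critical

variable {σ α : ℝ}

/-- `W` is a critical Hardy-weight for `(-Δ_ℕ)^σ`: no larger weight on `{1, 2, …}` satisfies the
Hardy inequality. -/
def IsCriticalHardyWeight (σ : ℝ) (W : ℕ → ℝ) : Prop :=
  IsHardyWeight σ W ∧ ∀ V : ℕ → ℝ, (∀ n, 0 ≤ V n) → (∃ n, 1 ≤ n ∧ V n ≠ 0) →
    ∃ f : ℕ → ℝ, f 0 = 0 ∧ (Function.support f).Finite ∧
      Qform σ f < ∑' n : ℕ, (W n + V n) * f n ^ 2

lemma exists_Qform_sub_tsum_le (h0 : 0 < σ) (h1 : σ ≤ 1) (hσα : σ < α)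
    (hcrit : α ≤ (3 + 2 * σ) / 4) :
    ∃ C, ∀ ε, 0 < ε → ε ≤ 1 → Qform σ (fun n ↦ Riesz α n * truncatedPower ε n) -
      ∑' n, Wweight σ α n * (Riesz α n * truncatedPower ε n) ^ 2 ≤ C * ε := by
  obtain ⟨C, henergy⟩ := exists_groundStateEnergy_truncatedPower_le h0 h1 hσα hcrit
  refine ⟨C, fun ε hε hε1 ↦ ?_⟩
  have hfin := (finite_support_truncatedPower hε).subset
    (Function.support_mul_subset_right (Riesz α) (truncatedPower ε))
  have hlim := tendsto_groundStateEnergy_Kker h0 hσα (by linarith) hfin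
  exact le_of_tendsto' (hlim.comp tendsto_finset_range) (henergy ε hε hε1)

theorem isCriticalHardyWeight_Wweight (h0 : 0 < σ) (h1 : σ ≤ 1) (hσα : σ < α)
    (hcrit : α ≤ (3 + 2 * σ) / 4) : IsCriticalHardyWeight σ (Wweight σ α) := by
  have hα : α < 3 / 2 := by linarith
  refine ⟨isHardyWeight_Wweight h0 h1 hσα hα, fun V hV ⟨n₀, hn₀, hVn₀⟩ ↦ ?_⟩
  obtain ⟨C, hdefect⟩ := exists_Qform_sub_tsum_le h0 h1 hσα hcrit
  have hn₀' : n₀ ≠ 0 := Nat.one_le_iff_ne_zero.mp hn₀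
  have hgain : Tendsto (fun ε ↦ V n₀ * (Riesz α n₀ * truncatedPower ε n₀) ^ 2 - C * ε) (𝓝[>] 0)
      (𝓝 (V n₀ * (Riesz α n₀ * (1 / 2)) ^ 2 - C * 0)) :=
    (((((tendsto_truncatedPower hn₀').const_mul _).pow 2).const_mul _).sub
      (tendsto_id.const_mul C)).mono_left nhdsWithin_le_nhds
  have hpos : 0 < V n₀ * (Riesz α n₀ * (1 / 2)) ^ 2 - C * 0 := by
    have := (hV n₀).lt_of_ne' hVn₀
    have := Riesz_pos (h0.trans hσα) hα hn₀'
    rw [mul_zero, sub_zero]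
    positivity
  obtain ⟨ε, hε, ⟨hε0, hε1⟩⟩ := ((hgain.eventually_const_lt hpos).and
    (Ioc_mem_nhdsGT one_pos)).exists
  set f : ℕ → ℝ := fun n ↦ Riesz α n * truncatedPower ε n with hf
  have hfin : f.support.Finite := (finite_support_truncatedPower hε0).subset
    (Function.support_mul_subset_right (Riesz α) (truncatedPower ε))
  have hsummable (U : ℕ → ℝ) : Summable fun n ↦ U n * f n ^ 2 :=
    summable_of_hasFiniteSupport (hfin.subset fun n hn hfn ↦ hn (by simp [hfn]))
  refine ⟨f, by simp only [hf, Riesz_zero_right, zero_mul], hfin, ?_⟩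
  calc Qform σ f ≤ ∑' n, Wweight σ α n * f n ^ 2 + C * ε :=
        sub_le_iff_le_add'.mp (hdefect ε hε0 hε1)
    _ < ∑' n, Wweight σ α n * f n ^ 2 + V n₀ * f n₀ ^ 2 := by linarith
    _ ≤ ∑' n, Wweight σ α n * f n ^ 2 + ∑' n, V n * f n ^ 2 := by
        gcongr
        exact (hsummable V).le_tsum n₀ fun n _ ↦ mul_nonneg (hV n) (sq_nonneg _)
    _ = ∑' n, (Wweight σ α n + V n) * f n ^ 2 := by
        simp only [add_mul, (hsummable _).tsum_add (hsummable V)]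

end Critical

section Reflection

variable {σ α : ℝ}

/-- The factor of `W_{α,σ}(n)` that does not depend on `n`. -/
noncomputable def hardyConstant (σ α : ℝ) : ℝ :=
  4 ^ σ * (Gamma (3 / 2 - α + σ) * Gamma α / (Gamma (α - σ) * Gamma (3 / 2 - α)))

lemma hardyConstant_pos (hσ : 0 < σ) (hσα : σ < α) (hα : α < 3 / 2) : 0 < hardyConstant σ α := by
  have h₁ := Gamma_pos_of_pos (hσ.trans hσα)
  have h₂ := Gamma_pos_of_pos (sub_pos.mpr hα)
  have h₃ := Gamma_pos_of_pos (show 0 < 3 / 2 - α + σ by linarith)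
  have h₄ := Gamma_pos_of_pos (sub_pos.mpr hσα)
  exact mul_pos (by positivity) (div_pos (mul_pos h₃ h₁) (mul_pos h₄ h₂))

lemma hardyConstant_reflect (σ α : ℝ) : hardyConstant σ (3 / 2 + σ - α) = hardyConstant σ α := by
  rw [hardyConstant, hardyConstant, show 3 / 2 - (3 / 2 + σ - α) + σ = α by ring,
    show 3 / 2 + σ - α - σ = 3 / 2 - α by ring, show 3 / 2 - (3 / 2 + σ - α) = α - σ by ring,
    show 3 / 2 + σ - α = 3 / 2 - α + σ by ring, mul_comm (Gamma α), mul_comm (Gamma (3 / 2 - α))]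

lemma Wweight_eq_mul_gammaRatio (σ α : ℝ) (n : ℕ) :
    Wweight σ α n = hardyConstant σ α *
      (gammaRatio (3 / 2 - α) (n + 1 / 2) / gammaRatio (3 / 2 + σ - α) (n + 1 / 2)) := by
  rw [Wweight, hardyConstant, gammaRatio, gammaRatio, div_div_div_eq]
  ring_nf

lemma Wweight_lt_Wweight_reflect (hσ : 0 < σ) (hσα : σ < α) (hα : α < 3 / 2)
    (hcrit : (3 + 2 * σ) / 4 < α) {n : ℕ} (hn : n ≠ 0) :
    Wweight σ α n < Wweight σ (3 / 2 + σ - α) n := by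
  have hn1 : (1 : ℝ) ≤ n := mod_cast Nat.one_le_iff_ne_zero.mpr hn
  have habs {p : ℝ} (h₀ : 0 < p) (h₁ : p < 3 / 2) : |p| < n + 1 / 2 := by
    rw [abs_of_pos h₀]
    linarith
  have h₁ : |3 / 2 - α| < n + 1 / 2 := habs (by linarith) (by linarith)
  have h₂ : |3 / 2 + σ - α| < n + 1 / 2 := habs (by linarith) (by linarith)
  have h₃ : |α - σ| < n + 1 / 2 := habs (by linarith) (by linarith)
  have h₄ : |α| < n + 1 / 2 := habs (by linarith) hα
  rw [Wweight_eq_mul_gammaRatio, Wweight_eq_mul_gammaRatio, hardyConstant_reflect,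
    show 3 / 2 - (3 / 2 + σ - α) = α - σ by ring, show 3 / 2 + σ - (3 / 2 + σ - α) = α by ring]
  refine mul_lt_mul_of_pos_left ?_ (hardyConstant_pos hσ hσα hα)
  rw [div_lt_div_iff₀ (gammaRatio_pos h₂) (gammaRatio_pos h₄)]
  exact gammaRatio_mul_lt_gammaRatio_mul h₃ h₂ h₁ h₄ (by ring) (by linarith) (by nlinarith)

lemma IsCriticalHardyWeight.eq_of_le {W W' : ℕ → ℝ} (hW : IsCriticalHardyWeight σ W)
    (hW' : IsHardyWeight σ W') (hle : ∀ n, n ≠ 0 → W n ≤ W' n) {n : ℕ} (hn : n ≠ 0) :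
    W n = W' n := by
  by_contra hne
  obtain ⟨f, hf0, hf, hlt⟩ := hW.2 (fun n ↦ |W' n - W n|) (fun n ↦ abs_nonneg _)
    ⟨n, Nat.one_le_iff_ne_zero.mpr hn, abs_ne_zero.mpr (sub_ne_zero.mpr (Ne.symm hne))⟩
  refine (hlt.trans_le (le_of_eq_of_le (tsum_congr fun k ↦ ?_) (hW' f hf0 hf))).false
  rcases eq_or_ne k 0 with rfl | hk
  · simp only [hf0, zero_pow two_ne_zero, mul_zero]
  · rw [abs_of_nonneg (sub_nonneg.mpr (hle k hk)), add_sub_cancel]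

theorem not_isCriticalHardyWeight_Wweight (h0 : 0 < σ) (h1 : σ ≤ 1) (hσα : σ < α) (hα : α < 3 / 2)
    (hcrit : (3 + 2 * σ) / 4 < α) : ¬IsCriticalHardyWeight σ (Wweight σ α) := fun hW ↦
  have hlt {n : ℕ} (hn : n ≠ 0) := Wweight_lt_Wweight_reflect h0 hσα hα hcrit hn
  (hlt one_ne_zero).ne (hW.eq_of_le (isHardyWeight_Wweight h0 h1 (by linarith) (by linarith))
    (fun _ hn ↦ (hlt hn).le) one_ne_zero)

end Reflection

end FractionalLaplacian

theorem stmt_0_general {σ α : ℝ} (hσ0 : 0 < σ) (hσ1 : σ ≤ 1) (hα1 : σ < α) (hα2 : α < 3 / 2) :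
    FractionalLaplacian.IsCriticalHardyWeight σ (Wweight σ α) ↔ α ≤ (3 + 2 * σ) / 4 :=
  ⟨fun h ↦ not_lt.mp fun hlt ↦
      FractionalLaplacian.not_isCriticalHardyWeight_Wweight hσ0 hσ1 hα1 hα2 hlt h,
    FractionalLaplacian.isCriticalHardyWeight_Wweight hσ0 hσ1 hα1⟩

/-- Criticality of the Hardy-weight `W_{α,σ}` for `(-Δ_ℕ)^σ` holds iff `α ≤ (3+2σ)/4`. -/
theorem stmt_0 (σ α : ℝ) (hσ0 : 0 < σ) (hσ1 : σ ≤ 1)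
    (hα1 : σ < α) (hα2 : α < min (3/2) (1 + σ)) :
    ((∀ f : ℕ → ℝ, f 0 = 0 → (Function.support f).Finite →
        (∑' n : ℕ, Wweight σ α n * (f n) ^ 2) ≤ Qform σ f) ∧
      (∀ Wt : ℕ → ℝ, (∀ n, 0 ≤ Wt n) → (∃ n, 1 ≤ n ∧ Wt n ≠ 0) →
        ∃ f : ℕ → ℝ, f 0 = 0 ∧ (Function.support f).Finite ∧
          Qform σ f < ∑' n : ℕ, (Wweight σ α n + Wt n) * (f n) ^ 2))
    ↔ α ≤ (3 + 2 * σ) / 4 :=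
  stmt_0_general hσ0 hσ1 hα1 (hα2.trans_le (min_le_left _ _))
end

section
/- Let σ ∈ (0,1] and σ < α < min{3/2, 1+σ}. Then the series Σ_{n≥1} I_α(n)²·W_{α,σ}(n) converges if and only if α < (3+2σ)/4. In particular, for α = (3+2σ)/4 one has Σ_{n≥1} I_α(n)²·W_{α,σ}(n) = ∞ (null-criticality of the optimal Hardy-weight). -/
open Real Filter

/-!
The weight is a quotient of Riesz potentials, so `I_α² W_{α,σ} = I_α I_{α-σ}`. Euler's limit formula
for `Γ` gives `Γ(n + a) / Γ(n + b) ~ n ^ (a - b)`, hence `I_α(n) ~ c_α n ^ (2α - 2)`, and the series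
compares with `∑ n ^ (4α - 2σ - 4)`.
-/

section

open Asymptotics

lemma isEquivalent_natCast_add (c : ℝ) :
    (fun n : ℕ => (n : ℝ) + c) ~[atTop] (fun n : ℕ => (n : ℝ)) :=
  IsEquivalent.refl.add_const_of_norm_tendsto_atTop
    (tendsto_norm_atTop_atTop.comp tendsto_natCast_atTop_atTop)

lemma eventually_natCast_add_pos (c : ℝ) : ∀ᶠ n : ℕ in atTop, 0 < (n : ℝ) + c :=
  (tendsto_atTop_add_const_right _ c tendsto_natCast_atTop_atTop).eventually_gt_atTop 0

lemma Gamma_natCast_add_add_one_eq_mul_prod {s : ℝ} (hs : 0 < s) (n : ℕ) :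
    Gamma (n + (s + 1)) = Gamma s * ∏ j ∈ Finset.range (n + 1), (s + j) := by
  induction n with
  | zero => simp [Gamma_add_one hs.ne', mul_comm]
  | succ n ih =>
    rw [Finset.prod_range_succ, ← mul_assoc, ← ih, Nat.cast_succ,
      show (n : ℝ) + 1 + (s + 1) = n + (s + 1) + 1 by ring, Gamma_add_one (by positivity)]
    ring

lemma isEquivalent_Gamma_natCast_add_add_one {s : ℝ} (hs : 0 < s) :
    (fun n : ℕ => Gamma (n + (s + 1))) ~[atTop] (fun n : ℕ => (n : ℝ) ^ s * n.factorial) := by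
  have hΓ : Gamma s ≠ 0 := (Gamma_pos_of_pos hs).ne'
  have hlim : Tendsto (fun n => Gamma s / GammaSeq s n) atTop (nhds 1) := by
    rw [← div_self hΓ]
    exact tendsto_const_nhds.div (GammaSeq_tendsto_Gamma s) hΓ
  refine isEquivalent_of_tendsto_one (hlim.congr fun n => ?_)
  rw [Pi.div_apply, Gamma_natCast_add_add_one_eq_mul_prod hs, GammaSeq, div_div_eq_mul_div]

lemma isEquivalent_Gamma_natCast_add_of_add_one {s : ℝ}
    (h : (fun n : ℕ => Gamma (n + (s + 1))) ~[atTop] (fun n : ℕ => (n : ℝ) ^ s * n.factorial)) :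
    (fun n : ℕ => Gamma (n + s)) ~[atTop] (fun n : ℕ => (n : ℝ) ^ (s - 1) * n.factorial) := by
  refine ((h.div (isEquivalent_natCast_add s)).congr_left ?_).congr_right ?_
  · filter_upwards [eventually_natCast_add_pos s] with n hn
    rw [Pi.div_apply, ← add_assoc, Gamma_add_one hn.ne', mul_div_cancel_left₀ _ hn.ne']
  · filter_upwards [eventually_ne_atTop 0] with n hn
    rw [Pi.div_apply, rpow_sub_one (Nat.cast_ne_zero.2 hn), div_mul_eq_mul_div]

lemma isEquivalent_Gamma_natCast_add (s : ℝ) :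
    (fun n : ℕ => Gamma (n + s)) ~[atTop] (fun n : ℕ => (n : ℝ) ^ (s - 1) * n.factorial) := by
  -- Euler's limit degenerates at the poles of `Γ`, so start from `0 < s` and step down.
  obtain ⟨m, hm⟩ := exists_nat_gt (-s)
  induction m generalizing s with
  | zero =>
    have hs : 0 < s := by simpa using hm
    exact isEquivalent_Gamma_natCast_add_of_add_one (isEquivalent_Gamma_natCast_add_add_one hs)
  | succ m ih =>
    have hm' : -(s + 1) < m := by rw [Nat.cast_succ] at hm; linarith
    refine isEquivalent_Gamma_natCast_add_of_add_one ?_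
    simpa only [add_sub_cancel_right] using ih (s + 1) hm'

lemma isEquivalent_Gamma_natCast_add_div (a b : ℝ) :
    (fun n : ℕ => Gamma (n + a) / Gamma (n + b)) ~[atTop] (fun n : ℕ => (n : ℝ) ^ (a - b)) := by
  refine ((isEquivalent_Gamma_natCast_add a).div (isEquivalent_Gamma_natCast_add b)).congr_right ?_
  filter_upwards [eventually_gt_atTop 0] with n hn
  rw [Pi.div_apply, mul_div_mul_right _ _ (Nat.cast_ne_zero.2 n.factorial_ne_zero),
    ← rpow_sub (Nat.cast_pos.2 hn), sub_sub_sub_cancel_right]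

lemma summable_iff_of_isEquivalent_const_mul_rpow {u : ℕ → ℝ} {c p : ℝ} (hc : c ≠ 0)
    (hu : u ~[atTop] fun n : ℕ => c * (n : ℝ) ^ p) : Summable u ↔ p < -1 := by
  rw [hu.summable_iff_nat, summable_mul_left_iff hc, summable_nat_rpow]

/-- The constant `c_α` in the asymptotics `I_α(n) ~ c_α n ^ (2α - 2)` of the Riesz potential. -/
noncomputable def rieszConst (α : ℝ) : ℝ :=
  4 / (4 ^ α * √2) * Gamma (3 / 2 - α) / Gamma α

lemma rieszConst_pos {α : ℝ} (hα₀ : 0 < α) (hα : α < 3 / 2) : 0 < rieszConst α := by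
  have hnum : 0 < 4 / (4 ^ α * √2) * Gamma (3 / 2 - α) :=
    mul_pos (by positivity) (Gamma_pos_of_pos (sub_pos.2 hα))
  exact div_pos hnum (Gamma_pos_of_pos hα₀)

lemma isEquivalent_Riesz (α : ℝ) :
    Riesz α ~[atTop] fun n : ℕ => rieszConst α * (n : ℝ) ^ (2 * α - 2) := by
  have hprod := (IsEquivalent.refl (u := fun n : ℕ => rieszConst α * (n : ℝ))).mul
    (isEquivalent_Gamma_natCast_add_div (α - 1) (2 - α))
  refine (hprod.congr_left (.of_forall fun n => ?_)).congr_right ?_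
  · simp only [Pi.mul_apply, Riesz, rieszConst, add_sub_assoc, sub_add_eq_add_sub]
    ring
  · filter_upwards [eventually_gt_atTop 0] with n hn
    have hexp : 2 * α - 2 = 1 + (α - 1 - (2 - α)) := by ring
    rw [Pi.mul_apply, mul_assoc, hexp, rpow_add (Nat.cast_pos.2 hn), rpow_one]

lemma summable_Riesz_mul_Riesz_iff {α β : ℝ} (hα : rieszConst α ≠ 0) (hβ : rieszConst β ≠ 0) :
    Summable (fun n => Riesz α n * Riesz β n) ↔ α + β < 3 / 2 := by
  have hprod : (fun n => Riesz α n * Riesz β n) ~[atTop]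
      fun n : ℕ => rieszConst α * rieszConst β * (n : ℝ) ^ (2 * α - 2 + (2 * β - 2)) := by
    refine ((isEquivalent_Riesz α).mul (isEquivalent_Riesz β)).congr_right ?_
    filter_upwards [eventually_gt_atTop 0] with n hn
    rw [Pi.mul_apply, rpow_add (Nat.cast_pos.2 hn), mul_mul_mul_comm]
  rw [summable_iff_of_isEquivalent_const_mul_rpow (mul_ne_zero hα hβ) hprod]
  constructor <;> intro h <;> linarith

lemma Riesz_mul_Wweight {σ α : ℝ} (hα₀ : 0 < α) (hα : α < 3 / 2) (n : ℕ) :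
    Riesz α n * Wweight σ α n = Riesz (α - σ) n := by
  obtain rfl | hn := n.eq_zero_or_pos
  · simp [Riesz]
  have hn' : (1 : ℝ) ≤ n := Nat.one_le_cast.2 hn
  have hΓ₁ := (Gamma_pos_of_pos hα₀).ne'
  have hΓ₂ := (Gamma_pos_of_pos (sub_pos.2 hα)).ne'
  have hΓ₃ : Gamma (n + α - 1) ≠ 0 := (Gamma_pos_of_pos (by linarith)).ne'
  have hΓ₄ : Gamma (n - α + 2) ≠ 0 := (Gamma_pos_of_pos (by linarith)).ne'
  simp only [Riesz, Wweight, rpow_sub four_pos, ← sub_add, ← add_sub_assoc,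
    show (n : ℝ) - α + σ + 2 = n - α + 2 + σ by ring]
  -- `field_simp` would rewrite the argument of this `Gamma` and then miss `hΓ₂`.
  generalize Gamma (3 / 2 - α) = Γ₂ at *
  field_simp

end

theorem stmt_1_general {σ α : ℝ} (hα₀ : 0 < α) (hα : α < 3 / 2) (hσα₀ : 0 < α - σ)
    (hσα : α - σ < 3 / 2) :
    Summable (fun n : ℕ => (Riesz α n) ^ 2 * Wweight σ α n) ↔ α < (3 + 2 * σ) / 4 := by
  simp only [sq, mul_assoc, Riesz_mul_Wweight hα₀ hα]
  rw [summable_Riesz_mul_Riesz_iff (rieszConst_pos hα₀ hα).ne' (rieszConst_pos hσα₀ hσα).ne']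
  constructor <;> intro h <;> linarith

/-- Null-criticality: `Σ I_α(n)² W_{α,σ}(n)` converges iff `α < (3+2σ)/4`. -/
theorem stmt_1 (σ α : ℝ) (hσ0 : 0 < σ) (hσ1 : σ ≤ 1)
    (hα1 : σ < α) (hα2 : α < min (3/2) (1 + σ)) :
    (Summable (fun n : ℕ => (Riesz α n) ^ 2 * Wweight σ α n) ↔ α < (3 + 2 * σ) / 4) ∧
    (α = (3 + 2 * σ) / 4 → ¬ Summable (fun n : ℕ => (Riesz α n) ^ 2 * Wweight σ α n)) := by
  have h := stmt_1_general (hσ0.trans hα1) (lt_min_iff.1 hα2).1 (sub_pos.2 hα1)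
    (by linarith [(lt_min_iff.1 hα2).1])
  exact ⟨h, fun hcrit hsum => (h.1 hsum).ne hcrit⟩
end

section
/- Let σ ∈ (0,1], α ∈ (0,3/2) and σ < α < 1+σ. Then the Hardy inequality Q^σ(f) ≥ Σ_{n≥1} W_{α,σ}(n)·f(n)² holds for every finitely supported f : ℕ → ℝ. -/
open Real Filter

/-! Let `λ(θ) = 2 - 2 cos θ` be the Fourier symbol of `-Δ` on `ℤ`. The power `λ ^ σ` has absolutely
convergent Fourier series, whose coefficients `κ(j)` give `K^σ_{m,n} = κ(m - n) - κ(m + n)`; on the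
half-line this reads `∑ n, K^σ_{m,n} sin (n θ) = λ(θ) ^ σ sin (m θ)`. The Riesz potential `I_α`
consists of multiples of the sine coefficients of `λ(θ) ^ (-α) sin θ`, so integrating gives
`(-Δ_ℕ)^σ I_α = I_{α - σ} = W_{α,σ} I_α`. For `σ ≤ 1` the sequence `κ` is nonpositive and
nondecreasing on `j ≥ 1`, so `K^σ` has nonpositive off-diagonal entries, and the ground-state
representation with respect to `I_α > 0` yields the Hardy inequality.
-/

/-! ### The kernel on the lattice -/

theorem inv_Gamma_eq_self_mul_inv_Gamma_add_one (x : ℝ) :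
    (Gamma x)⁻¹ = x * (Gamma (x + 1))⁻¹ := by
  rcases eq_or_ne x 0 with rfl | hx
  · simp [Gamma_zero]
  · rw [Gamma_add_one hx, mul_inv, mul_inv_cancel_left₀ hx]

theorem rbinom_eq_mul_inv (a b : ℝ) :
    rbinom a b = Gamma (a + 1) * ((Gamma (b + 1))⁻¹ * (Gamma (a - b + 1))⁻¹) := by
  rw [rbinom, div_eq_mul_inv, mul_inv]

theorem rbinom_add_one {a : ℝ} (b : ℝ) (ha : a + 1 ≠ 0) :
    rbinom (a + 1) b = rbinom a b + rbinom a (b - 1) := by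
  have hb := inv_Gamma_eq_self_mul_inv_Gamma_add_one b
  have hab := inv_Gamma_eq_self_mul_inv_Gamma_add_one (a - b + 1)
  simp only [rbinom_eq_mul_inv, Gamma_add_one ha, sub_add_cancel,
    show a + 1 - b + 1 = a - b + 1 + 1 by ring, show a - (b - 1) + 1 = a - b + 1 + 1 by ring,
    hb, hab]
  ring

theorem rbinom_symm (a b : ℝ) : rbinom a (a - b) = rbinom a b := by
  rw [rbinom, rbinom, sub_sub_cancel, mul_comm (Gamma (b + 1))]

/-- The kernel of `(-Δ)^s` on the whole lattice `ℤ` at displacement `j`, that is, the `j`-th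
Fourier coefficient of `θ ↦ (2 - 2 cos θ) ^ s`. -/
noncomputable def latticeKernel (s : ℝ) (j : ℤ) : ℝ :=
  (-1) ^ j * rbinom (2 * s) (s + j)

theorem latticeKernel_neg (s : ℝ) (j : ℤ) : latticeKernel s (-j) = latticeKernel s j := by
  have hrefl : s + ((-j : ℤ) : ℝ) = 2 * s - (s + j) := by push_cast; ring
  rw [latticeKernel, latticeKernel, hrefl, rbinom_symm, zpow_neg, ← inv_zpow, inv_neg_one]

theorem neg_one_zpow_add_one (j : ℤ) : (-1 : ℝ) ^ (j + 1) = -(-1) ^ j := by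
  rw [zpow_add_one₀ (by norm_num), mul_neg_one]

theorem neg_one_zpow_sub_one (j : ℤ) : (-1 : ℝ) ^ (j - 1) = -(-1) ^ j := by
  rw [zpow_sub_one₀ (by norm_num), inv_neg_one, mul_neg_one]

theorem latticeKernel_add_one_mul (s : ℝ) (j : ℤ) :
    latticeKernel s (j + 1) * (j + 1 + s) = latticeKernel s j * (j - s) := by
  have h₁ := inv_Gamma_eq_self_mul_inv_Gamma_add_one (s + j + 1)
  have h₂ := inv_Gamma_eq_self_mul_inv_Gamma_add_one (s - j)
  simp only [latticeKernel, rbinom_eq_mul_inv, neg_one_zpow_add_one, Int.cast_add, Int.cast_one]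
  rw [show s + ((j : ℝ) + 1) + 1 = s + j + 1 + 1 by ring,
    show 2 * s - (s + ((j : ℝ) + 1)) + 1 = s - j by ring,
    show 2 * s - (s + (j : ℝ)) + 1 = s - j + 1 by ring, h₁, h₂]
  ring

theorem latticeKernel_add_one_left {s : ℝ} (hs : -1 / 2 < s) (j : ℤ) :
    latticeKernel (s + 1) j =
      2 * latticeKernel s j - latticeKernel s (j + 1) - latticeKernel s (j - 1) := by
  have pascal := @rbinom_add_one
  simp only [latticeKernel, neg_one_zpow_add_one, neg_one_zpow_sub_one, Int.cast_add,
    Int.cast_sub, Int.cast_one]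
  rw [show 2 * (s + 1) = 2 * s + 1 + 1 by ring, pascal _ (by linarith), pascal _ (by linarith),
    pascal _ (by linarith), show s + 1 + (j : ℝ) = s + (j + 1) by ring,
    show s + ((j : ℝ) + 1) - 1 = s + j by ring, show s + (j : ℝ) - 1 = s + (j - 1) by ring]
  ring

theorem Kker_eq_latticeKernel (σ : ℝ) (m n : ℕ) :
    Kker σ m n = latticeKernel σ (m - n) - latticeKernel σ (m + n) := by
  have hsign : (-1 : ℝ) ^ (m - n : ℤ) = (-1) ^ (m + n) := by
    rw [← zpow_natCast, show ((m + n : ℕ) : ℤ) = m - n + 2 * n by push_cast; ring,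
      zpow_add₀ (by norm_num), (even_two_mul (n : ℤ)).neg_one_zpow, mul_one]
  have hsign' : (-1 : ℝ) ^ (m + n : ℤ) = (-1) ^ (m + n) := by
    rw [← zpow_natCast, Nat.cast_add]
  simp only [Kker, latticeKernel, hsign, hsign']
  push_cast
  rw [add_sub_assoc, add_assoc]
  ring

theorem Kker_comm (σ : ℝ) (m n : ℕ) : Kker σ m n = Kker σ n m := by
  rw [Kker_eq_latticeKernel, Kker_eq_latticeKernel, ← latticeKernel_neg σ (m - n), neg_sub,
    add_comm (m : ℤ)]

theorem latticeKernel_zero_pos {s : ℝ} (hs : 0 < s) : 0 < latticeKernel s 0 := by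
  have : 0 < Gamma (2 * s + 1) := Gamma_pos_of_pos (by linarith)
  have : 0 < Gamma (s + 1) := Gamma_pos_of_pos (by linarith)
  rw [latticeKernel, rbinom, Int.cast_zero, zpow_zero, add_zero, one_mul,
    show 2 * s - s + 1 = s + 1 by ring]
  positivity

theorem latticeKernel_nonpos {s : ℝ} (hs0 : 0 < s) (hs1 : s ≤ 1) {j : ℤ} (hj : j ≠ 0) :
    latticeKernel s j ≤ 0 := by
  have hnat (n : ℕ) : latticeKernel s (n + 1) ≤ 0 := by
    induction n with
    | zero =>
      have hrec := latticeKernel_add_one_mul s 0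
      have h0 := latticeKernel_zero_pos hs0
      push_cast at hrec ⊢
      nlinarith
    | succ n ih =>
      have hrec := latticeKernel_add_one_mul s (n + 1)
      have : (0 : ℝ) ≤ n := n.cast_nonneg
      push_cast at hrec ⊢
      nlinarith
  rcases Int.eq_nat_or_neg j with ⟨n, rfl | rfl⟩ <;> obtain ⟨k, rfl⟩ : ∃ k, n = k + 1 :=
    Nat.exists_eq_succ_of_ne_zero (by simpa using hj)
  · exact hnat k
  · rw [latticeKernel_neg]
    exact hnat k

theorem summable_latticeKernel {s : ℝ} (hs0 : 0 < s) (hs1 : s ≤ 1) :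
    Summable (latticeKernel s) := by
  have htele (j : ℤ) : 2 * s * latticeKernel s j =
      (j + s) * latticeKernel s j - (j + 1 + s) * latticeKernel s (j + 1) := by
    linear_combination latticeKernel_add_one_mul s j
  have hnonpos (n : ℕ) : latticeKernel s (n + 1) ≤ 0 :=
    latticeKernel_nonpos hs0 hs1 (by positivity)
  have hsum (N : ℕ) : 2 * s * ∑ j ∈ Finset.range N, latticeKernel s (j + 1) =
      (1 + s) * latticeKernel s 1 - (N + 1 + s) * latticeKernel s (N + 1) := by
    induction N with
    | zero => simp
    | succ N ih =>
      rw [Finset.sum_range_succ, mul_add, ih, htele]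
      push_cast
      ring
  have hbound (N : ℕ) : ∑ j ∈ Finset.range N, -latticeKernel s (j + 1) ≤
      -((1 + s) * latticeKernel s 1) / (2 * s) := by
    rw [Finset.sum_neg_distrib, le_div_iff₀ (by positivity)]
    have hlast : (N + 1 + s) * latticeKernel s (N + 1) ≤ 0 :=
      mul_nonpos_of_nonneg_of_nonpos (by positivity) (hnonpos N)
    linarith [hsum N]
  have hshift : Summable fun n : ℕ => latticeKernel s (n + 1) :=
    summable_neg_iff.mp (summable_of_sum_range_le (fun n => neg_nonneg.mpr (hnonpos n)) hbound)
  have hnat : Summable fun n : ℕ => latticeKernel s n := by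
    rw [← summable_nat_add_iff 1]
    exact_mod_cast hshift
  exact .of_nat_of_neg hnat (by simpa only [latticeKernel_neg] using hnat)

theorem monotone_latticeKernel_add_one {s : ℝ} (hs0 : 0 < s) (hs1 : s ≤ 1) :
    Monotone fun j : ℕ => latticeKernel s (j + 1) := by
  refine monotone_nat_of_le_succ fun j => ?_
  have hrec := latticeKernel_add_one_mul s (j + 1)
  have hnonpos : latticeKernel s (j + 1) ≤ 0 := latticeKernel_nonpos hs0 hs1 (by positivity)
  have : (0 : ℝ) ≤ j := j.cast_nonneg
  push_cast at hrec ⊢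
  nlinarith

theorem Kker_nonpos {σ : ℝ} (hσ0 : 0 < σ) (hσ1 : σ ≤ 1) {m n : ℕ} (hmn : m ≠ n) :
    Kker σ m n ≤ 0 := by
  wlog hlt : n < m generalizing m n
  · rw [Kker_comm]
    exact this hmn.symm (by omega)
  obtain ⟨j, rfl⟩ := Nat.exists_eq_add_of_lt hlt
  have hmono := monotone_latticeKernel_add_one hσ0 hσ1 (show j ≤ j + 2 * n by omega)
  rwa [Kker_eq_latticeKernel, sub_nonpos,
    show ((n + j + 1 : ℕ) - n : ℤ) = j + 1 by push_cast; ring,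
    show ((n + j + 1 : ℕ) + n : ℤ) = ↑(j + 2 * n) + 1 by push_cast; ring]

theorem add_one_mul_latticeKernel_sub (s : ℝ) (j : ℤ) :
    (j + 1) * latticeKernel s (j + 1) - j * latticeKernel s j =
      -s * (latticeKernel s j + latticeKernel s (j + 1)) := by
  linear_combination latticeKernel_add_one_mul s j

-- With `κ` the lattice kernel, `n * κ(n ± m)` is `(n ± m) * κ(n ± m)` up to a summable term, and
-- the difference of these two products telescopes through the increments of `j * κ(j)`.
theorem summable_mul_Kker {σ : ℝ} (hσ0 : 0 < σ) (hσ1 : σ ≤ 1) (m : ℕ) :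
    Summable fun n : ℕ => n * Kker σ m n := by
  have hshift (k : ℤ) : Summable fun n : ℕ => latticeKernel σ (n + k) :=
    ((summable_latticeKernel hσ0 hσ1).comp_injective
      (add_left_injective k)).comp_injective Nat.cast_injective
  have hdecomp (n : ℕ) : n * Kker σ m n =
      m * (latticeKernel σ (n + -m) + latticeKernel σ (n + m)) + σ * ∑ i ∈ Finset.range (2 * m),
        (latticeKernel σ (n + (i - m)) + latticeKernel σ (n + (i + 1 - m))) := by
    have hstep (i : ℕ) :
        ((n + (↑(i + 1) - m) : ℤ) : ℝ) * latticeKernel σ (n + (↑(i + 1) - m)) -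
          ((n + (i - m) : ℤ) : ℝ) * latticeKernel σ (n + (i - m)) =
        -σ * (latticeKernel σ (n + (i - m)) + latticeKernel σ (n + (i + 1 - m))) := by
      rw [show (n + (↑(i + 1) - m) : ℤ) = n + (i - m) + 1 by push_cast; ring,
        show (n + (i + 1 - m) : ℤ) = n + (i - m) + 1 by ring,
        ← add_one_mul_latticeKernel_sub, Int.cast_add _ 1, Int.cast_one]
    have htele := Finset.sum_range_sub
      (fun i : ℕ => ((n + (i - m) : ℤ) : ℝ) * latticeKernel σ (n + (i - m))) (2 * m)
    simp only [hstep, ← Finset.mul_sum] at htele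
    rw [show (n + (↑(2 * m) - m) : ℤ) = n + m by push_cast; ring,
      show (n + (↑(0 : ℕ) - m) : ℤ) = n - m by push_cast; ring] at htele
    rw [Kker_comm, Kker_eq_latticeKernel, ← sub_eq_add_neg]
    push_cast at htele
    linear_combination htele
  simp only [hdecomp]
  exact (((hshift _).add (hshift _)).mul_left _).add
    ((summable_sum fun i _ => (hshift _).add (hshift _)).mul_left _)

/-! ### Powers of the symbol -/

section

open MeasureTheory Set

theorem ofReal_rpow_mul_one_sub_rpow {a b t : ℝ} (ht : t ∈ Icc (0 : ℝ) 1) :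
    ((t ^ (a - 1) * (1 - t) ^ (b - 1) : ℝ) : ℂ) =
      (t : ℂ) ^ ((a : ℂ) - 1) * (1 - (t : ℂ)) ^ ((b : ℂ) - 1) := by
  rw [Complex.ofReal_mul, Complex.ofReal_cpow ht.1, Complex.ofReal_cpow (sub_nonneg.mpr ht.2)]
  push_cast
  rfl

theorem intervalIntegrable_rpow_mul_one_sub_rpow {a b : ℝ} (ha : 0 < a) (hb : 0 < b) :
    IntervalIntegrable (fun t => t ^ (a - 1) * (1 - t) ^ (b - 1)) volume 0 1 := by
  have hconv := (Complex.betaIntegral_convergent (u := a) (v := b) (by simpa) (by simpa)).norm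
  refine (hconv.congr fun t ht => ?_)
  rw [uIoc_of_le zero_le_one] at ht
  have ht' := Ioc_subset_Icc_self ht
  rw [← ofReal_rpow_mul_one_sub_rpow ht', Complex.norm_real, norm_of_nonneg]
  exact mul_nonneg (rpow_nonneg ht'.1 _) (rpow_nonneg (sub_nonneg.mpr ht'.2) _)

theorem integral_rpow_mul_one_sub_rpow {a b : ℝ} (ha : 0 < a) (hb : 0 < b) :
    ∫ t in 0..1, t ^ (a - 1) * (1 - t) ^ (b - 1) = Gamma a * Gamma b / Gamma (a + b) := by
  have hcast : Complex.betaIntegral a b =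
      ((∫ t in 0..1, t ^ (a - 1) * (1 - t) ^ (b - 1) : ℝ) : ℂ) := by
    rw [← intervalIntegral.integral_ofReal, Complex.betaIntegral]
    refine intervalIntegral.integral_congr fun t ht => ?_
    rw [uIcc_of_le zero_le_one] at ht
    exact (ofReal_rpow_mul_one_sub_rpow ht).symm
  rw [← ProbabilityTheory.beta, ProbabilityTheory.beta_eq_betaIntegralReal _ _ ha hb, hcast,
    Complex.ofReal_re]

/-- The Fourier symbol of the discrete Laplacian `-Δ` on `ℤ`. -/
noncomputable def lapSymbol (θ : ℝ) : ℝ :=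
  2 - 2 * cos θ

theorem lapSymbol_nonneg (θ : ℝ) : 0 ≤ lapSymbol θ := by
  linarith [cos_le_one θ, lapSymbol.eq_def θ]

theorem continuous_lapSymbol : Continuous lapSymbol := by
  unfold lapSymbol
  fun_prop

theorem lapSymbol_pos {θ : ℝ} (hθ : θ ∈ Ioc 0 π) : 0 < lapSymbol θ := by
  have := cos_lt_cos_of_nonneg_of_le_pi le_rfl hθ.2 hθ.1
  rw [cos_zero] at this
  linarith [lapSymbol.eq_def θ]

-- The substitution `t = λ(θ) / 4 = sin² (θ / 2)` turns a power of the symbol into a Beta integrand.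
theorem sin_mul_beta_integrand_eq {s θ : ℝ} (hθ : θ ∈ Ioo 0 π) :
    sin θ / 2 * ((lapSymbol θ / 4) ^ (s + 1 / 2 - 1) * (1 - lapSymbol θ / 4) ^ (1 / 2 - 1 : ℝ)) =
      (4 ^ s)⁻¹ * lapSymbol θ ^ s := by
  have ht : 0 < lapSymbol θ / 4 := div_pos (lapSymbol_pos (Ioo_subset_Ioc_self hθ)) four_pos
  have hsin : 0 < sin θ := sin_pos_of_mem_Ioo hθ
  have hprod : lapSymbol θ / 4 * (1 - lapSymbol θ / 4) = (sin θ / 2) ^ 2 := by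
    rw [div_pow, sin_sq, lapSymbol]
    ring
  have h1t : 0 < 1 - lapSymbol θ / 4 := pos_of_mul_pos_right (by rw [hprod]; positivity) ht.le
  have hinv : (lapSymbol θ / 4 * (1 - lapSymbol θ / 4)) ^ (-(1 / 2) : ℝ) = (sin θ / 2)⁻¹ := by
    rw [hprod, rpow_neg (sq_nonneg _), ← sqrt_eq_rpow, sqrt_sq (by positivity)]
  rw [show s + 1 / 2 - 1 = s + -(1 / 2) by ring, show (1 / 2 - 1 : ℝ) = -(1 / 2) by norm_num,
    rpow_add ht, mul_assoc, ← mul_rpow ht.le h1t.le, hinv, mul_left_comm,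
    mul_inv_cancel₀ (by positivity), mul_one, div_rpow (lapSymbol_nonneg θ) four_pos.le,
    div_eq_inv_mul]

theorem hasDerivAt_lapSymbol_div_four (θ : ℝ) :
    HasDerivAt (fun θ => lapSymbol θ / 4) (sin θ / 2) θ := by
  have := (((hasDerivAt_cos θ).const_mul 2).const_sub 2).div_const 4
  rwa [show -(2 * -sin θ) / 4 = sin θ / 2 by ring] at this

theorem lapSymbol_zero : lapSymbol 0 = 0 := by simp [lapSymbol]

theorem lapSymbol_pi : lapSymbol π = 4 := by norm_num [lapSymbol]

theorem intervalIntegrable_lapSymbol_rpow {s : ℝ} (hs : -1 / 2 < s) :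
    IntervalIntegrable (fun θ => lapSymbol θ ^ s) volume 0 π := by
  have hbeta := intervalIntegrable_rpow_mul_one_sub_rpow (a := s + 1 / 2) (b := 1 / 2)
    (by linarith) (by norm_num)
  have hsubst := integrableOn_Icc_deriv_smul_iff_of_deriv_nonneg
    (g := fun t : ℝ => t ^ (s + 1 / 2 - 1) * (1 - t) ^ (1 / 2 - 1 : ℝ))
    (continuous_lapSymbol.div_const 4).continuousOn
    (fun θ (_ : θ ∈ Ioo 0 π) => hasDerivAt_lapSymbol_div_four θ)
    (fun θ hθ => (half_pos (sin_pos_of_mem_Ioo hθ)).le) pi_nonneg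
  rw [lapSymbol_zero, lapSymbol_pi, zero_div, div_self four_ne_zero,
    ← intervalIntegrable_iff_integrableOn_Icc_of_le zero_le_one] at hsubst
  have hpow : IntegrableOn _ (Ioo 0 π) :=
    ((hsubst.mpr hbeta).mono_set Ioo_subset_Icc_self).const_mul (4 ^ s)
  rw [intervalIntegrable_iff_integrableOn_Ioo_of_le pi_nonneg]
  refine hpow.congr_fun (fun θ hθ => ?_) measurableSet_Ioo
  dsimp only
  rw [smul_eq_mul, sin_mul_beta_integrand_eq hθ, mul_inv_cancel_left₀ (by positivity)]

theorem integral_lapSymbol_rpow {s : ℝ} (hs : -1 / 2 < s) :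
    ∫ θ in 0..π, lapSymbol θ ^ s = 4 ^ s * (√π * Gamma (s + 1 / 2) / Gamma (s + 1)) := by
  have hsubst := integral_Icc_deriv_smul_of_deriv_nonneg
    (g := fun t : ℝ => t ^ (s + 1 / 2 - 1) * (1 - t) ^ (1 / 2 - 1 : ℝ))
    (continuous_lapSymbol.div_const 4).continuousOn
    (fun θ (_ : θ ∈ Ioo 0 π) => hasDerivAt_lapSymbol_div_four θ)
    (fun θ hθ => (half_pos (sin_pos_of_mem_Ioo hθ)).le) pi_nonneg
  simp only [smul_eq_mul] at hsubst
  rw [lapSymbol_zero, lapSymbol_pi, zero_div, div_self four_ne_zero, integral_Icc_eq_integral_Ioo,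
    setIntegral_congr_fun measurableSet_Ioo fun θ hθ => sin_mul_beta_integrand_eq (s := s) hθ,
    integral_const_mul, ← integral_Ioc_eq_integral_Ioo, integral_Icc_eq_integral_Ioc,
    ← intervalIntegral.integral_of_le zero_le_one, ← intervalIntegral.integral_of_le pi_nonneg,
    integral_rpow_mul_one_sub_rpow (by linarith) (by norm_num)] at hsubst
  rw [add_assoc, add_halves, Gamma_one_half_eq, inv_mul_eq_iff_eq_mul₀ (by positivity)] at hsubst
  rw [hsubst, mul_comm √π]

theorem pi_mul_latticeKernel_zero {s : ℝ} (hs : -1 / 2 < s) :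
    π * latticeKernel s 0 = 4 ^ s * (√π * Gamma (s + 1 / 2) / Gamma (s + 1)) := by
  have hdup := Gamma_mul_Gamma_add_half (s + 1 / 2)
  have hpow : (2 : ℝ) ^ (1 - 2 * (s + 1 / 2)) = (4 ^ s)⁻¹ := by
    rw [show 1 - 2 * (s + 1 / 2) = 2 * -s by ring, rpow_mul two_pos.le, ← rpow_neg four_pos.le]
    norm_num
  have hΓ : Gamma (s + 1) ≠ 0 := (Gamma_pos_of_pos (by linarith)).ne'
  rw [add_assoc, add_halves, hpow, show 2 * (s + 1 / 2) = 2 * s + 1 by ring, mul_right_comm,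
    eq_mul_inv_iff_mul_eq₀ (by positivity)] at hdup
  rw [latticeKernel, rbinom, Int.cast_zero, zpow_zero, add_zero, one_mul,
    show 2 * s - s + 1 = s + 1 by ring, ← mul_div_assoc, ← mul_div_assoc,
    div_eq_div_iff (by positivity) hΓ]
  linear_combination -√π * Gamma (s + 1) * hdup -
    Gamma (2 * s + 1) * Gamma (s + 1) * sq_sqrt pi_nonneg

theorem lapSymbol_rpow_add_one {s : ℝ} (hs : s + 1 ≠ 0) (θ : ℝ) :
    lapSymbol θ ^ (s + 1) = lapSymbol θ ^ s * (2 - 2 * cos θ) :=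
  rpow_add_one' (lapSymbol_nonneg θ) hs

theorem intervalIntegrable_lapSymbol_rpow_mul_cos {s : ℝ} (hs : -1 / 2 < s) (k : ℝ) :
    IntervalIntegrable (fun θ => lapSymbol θ ^ s * cos (k * θ)) volume 0 π :=
  (intervalIntegrable_lapSymbol_rpow hs).mul_continuousOn (by fun_prop)

theorem integral_lapSymbol_rpow_add_one_mul_cos {s : ℝ} (hs : -1 / 2 < s) (k : ℝ) :
    ∫ θ in 0..π, lapSymbol θ ^ (s + 1) * cos (k * θ) =
      2 * (∫ θ in 0..π, lapSymbol θ ^ s * cos (k * θ)) -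
        (∫ θ in 0..π, lapSymbol θ ^ s * cos ((k + 1) * θ)) -
        ∫ θ in 0..π, lapSymbol θ ^ s * cos ((k - 1) * θ) := by
  have hinteg := intervalIntegrable_lapSymbol_rpow_mul_cos hs
  rw [← intervalIntegral.integral_const_mul, ← intervalIntegral.integral_sub
    ((hinteg k).const_mul 2) (hinteg (k + 1)), ← intervalIntegral.integral_sub
    (((hinteg k).const_mul 2).sub (hinteg (k + 1))) (hinteg (k - 1))]
  refine intervalIntegral.integral_congr fun θ _ => ?_
  rw [lapSymbol_rpow_add_one (by linarith), add_mul, sub_mul k, one_mul, cos_add, cos_sub]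
  ring

theorem integral_lapSymbol_rpow_mul_cos {s : ℝ} (hs : -1 / 2 < s) (n : ℕ) :
    ∫ θ in 0..π, lapSymbol θ ^ s * cos (n * θ) = π * latticeKernel s n := by
  have hzero {s : ℝ} (hs : -1 / 2 < s) :
      ∫ θ in 0..π, lapSymbol θ ^ s * cos (0 * θ) = π * latticeKernel s 0 := by
    simp only [zero_mul, cos_zero, mul_one, integral_lapSymbol_rpow hs,
      pi_mul_latticeKernel_zero hs]
  induction n using Nat.twoStepInduction generalizing s with
  | zero => exact_mod_cast hzero hs
  | one =>
    have hrec := integral_lapSymbol_rpow_add_one_mul_cos hs 0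
    have hker := latticeKernel_add_one_left hs 0
    simp only [zero_add, zero_sub, neg_mul, cos_neg] at hrec
    rw [hzero hs, hzero (by linarith)] at hrec
    rw [zero_add, zero_sub, latticeKernel_neg] at hker
    rw [Nat.cast_one, Nat.cast_one]
    linear_combination (hrec - π * hker) / 2
  | more n ih₀ ih₁ =>
    have hrec := integral_lapSymbol_rpow_add_one_mul_cos hs (n + 1 : ℕ)
    have hker := latticeKernel_add_one_left hs (n + 1 : ℕ)
    rw [ih₁ hs, ih₁ (by linarith), Nat.cast_succ (R := ℝ), add_sub_cancel_right, ih₀ hs] at hrec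
    rw [Nat.cast_succ (R := ℤ), add_sub_cancel_right] at hker
    rw [Nat.cast_succ (R := ℤ)] at hrec
    rw [Nat.cast_succ (n + 1), Nat.cast_succ (n + 1), Nat.cast_succ, Nat.cast_succ]
    linear_combination hrec - π * hker

/-! ### Fourier expansion -/

theorem integral_fourier_mul_of_even {f : ℝ → ℝ} (hf : Continuous f) (heven : f.Even) (n : ℤ) :
    ∫ x in -π..π, Complex.exp (-(n * x * Complex.I)) * f x =
      2 * ((∫ x in 0..π, f x * cos (n * x) : ℝ) : ℂ) := by
  have hinteg (a b : ℝ) : IntervalIntegrable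
      (fun x : ℝ => Complex.exp (-(n * x * Complex.I)) * f x) volume a b :=
    (by fun_prop : Continuous _).intervalIntegrable a b
  have hinteg' : IntervalIntegrable
      (fun x : ℝ => Complex.exp (n * x * Complex.I) * f x) volume 0 π :=
    (by fun_prop : Continuous _).intervalIntegrable 0 π
  have hneg : ∫ x in -π..0, Complex.exp (-(n * x * Complex.I)) * f x =
      ∫ x in 0..π, Complex.exp (n * x * Complex.I) * f x := by
    rw [← neg_zero, ← intervalIntegral.integral_comp_neg, neg_zero]
    simp only [Complex.ofReal_neg, mul_neg, neg_mul, neg_neg, heven _]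
  rw [← intervalIntegral.integral_add_adjacent_intervals (hinteg (-π) 0) (hinteg 0 π), hneg,
    ← intervalIntegral.integral_add hinteg' (hinteg 0 π), ← intervalIntegral.integral_ofReal,
    ← intervalIntegral.integral_const_mul]
  refine intervalIntegral.integral_congr fun x _ => ?_
  push_cast
  rw [mul_left_comm, Complex.two_cos]
  ring_nf

theorem hasSum_mul_exp_of_integral_mul_cos {f : ℝ → ℝ} (hf : Continuous f)
    (hper : f.Periodic (2 * π)) (heven : f.Even) {c : ℤ → ℝ} (hc : Summable c)
    (hcoeff : ∀ n : ℤ, ∫ x in 0..π, f x * cos (n * x) = π * c n) (x : ℝ) :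
    HasSum (fun n : ℤ => c n * Complex.exp (n * x * Complex.I)) (f x) := by
  have : Fact (0 < 2 * π) := ⟨two_pi_pos⟩
  have hperℂ : (fun x => (f x : ℂ)).Periodic (2 * π) := fun x => by simp only [hper x]
  let F : C(AddCircle (2 * π), ℂ) :=
    ⟨hperℂ.lift, continuous_coinduced_dom.mpr (Complex.continuous_ofReal.comp hf)⟩
  have hchar (n : ℤ) (x : ℝ) :
      fourier n (x : AddCircle (2 * π)) = Complex.exp (n * x * Complex.I) := by
    rw [fourier_coe_apply]
    congr 1
    push_cast
    field_simp
  have hF (n : ℤ) : fourierCoeff F n = c n := by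
    rw [fourierCoeff_eq_intervalIntegral _ _ (-π), show -π + 2 * π = π by ring]
    simp only [hchar, Int.cast_neg, neg_mul, smul_eq_mul]
    change (1 / (2 * π)) • ∫ x in -π..π, Complex.exp (-(n * x * Complex.I)) * f x = c n
    rw [integral_fourier_mul_of_even hf heven, hcoeff, Complex.real_smul]
    push_cast
    field_simp
  have hsum := has_pointwise_sum_fourier_series_of_summable (f := F)
    (by rw [funext hF]; exact Complex.summable_ofReal.mpr hc) x
  simp only [hF, hchar, smul_eq_mul] at hsum
  exact hsum

theorem hasSum_latticeKernel_mul_exp {s : ℝ} (hs0 : 0 < s) (hs1 : s ≤ 1) (θ : ℝ) :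
    HasSum (fun n : ℤ => latticeKernel s n * Complex.exp (n * θ * Complex.I))
      ((lapSymbol θ ^ s : ℝ) : ℂ) := by
  refine hasSum_mul_exp_of_integral_mul_cos (f := fun θ => lapSymbol θ ^ s)
    (continuous_lapSymbol.rpow_const fun _ => Or.inr hs0.le)
    (fun θ => by simp only [lapSymbol, cos_add_two_pi]) (fun θ => by simp only [lapSymbol, cos_neg])
    (summable_latticeKernel hs0 hs1) (fun n => ?_) θ
  have hs : -1 / 2 < s := by linarith
  rcases Int.eq_nat_or_neg n with ⟨k, rfl | rfl⟩
  · exact_mod_cast integral_lapSymbol_rpow_mul_cos hs k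
  · simpa [latticeKernel_neg] using integral_lapSymbol_rpow_mul_cos hs k

theorem hasSum_latticeKernel_sub_mul_sin {s : ℝ} (hs0 : 0 < s) (hs1 : s ≤ 1) (m : ℤ) (θ : ℝ) :
    HasSum (fun n : ℤ => latticeKernel s (n - m) * sin (n * θ))
      (lapSymbol θ ^ s * sin (m * θ)) := by
  have him (k : ℤ) : (Complex.exp (k * θ * Complex.I)).im = sin (k * θ) := by
    exact_mod_cast Complex.exp_ofReal_mul_I_im (k * θ)
  have hmul := (hasSum_latticeKernel_mul_exp hs0 hs1 θ).mul_right
    (Complex.exp (m * θ * Complex.I))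
  have hshift := Complex.hasSum_im ((Equiv.subRight m).hasSum_iff.mpr hmul)
  rw [Complex.im_ofReal_mul, him] at hshift
  convert hshift using 2 with n
  rw [Function.comp_apply, Equiv.subRight_apply, mul_assoc, ← Complex.exp_add,
    Complex.im_ofReal_mul, ← him, Int.cast_sub, ← add_mul, ← add_mul, sub_add_cancel]

theorem hasSum_Kker_mul_sin {σ : ℝ} (hσ0 : 0 < σ) (hσ1 : σ ≤ 1) (m : ℕ) (θ : ℝ) :
    HasSum (fun n : ℕ => Kker σ m n * sin (n * θ)) (lapSymbol θ ^ σ * sin (m * θ)) := by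
  have hfold := (hasSum_latticeKernel_sub_mul_sin hσ0 hσ1 m θ).nat_add_neg
  simp only [Int.cast_zero, zero_mul, sin_zero, mul_zero, add_zero] at hfold
  push_cast at hfold
  refine hfold.congr_fun fun n => ?_
  rw [Kker_comm, Kker_eq_latticeKernel, ← latticeKernel_neg σ (n + m), neg_add', neg_mul, sin_neg]
  ring

/-! ### The Riesz potential -/

theorem abs_sin_nat_mul_le (n : ℕ) (x : ℝ) : |sin (n * x)| ≤ n * |sin x| := by
  induction n with
  | zero => simp
  | succ n ih =>
    calc |sin ((n + 1 : ℕ) * x)| = |sin (n * x) * cos x + cos (n * x) * sin x| := by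
          rw [Nat.cast_succ, add_one_mul, sin_add]
      _ ≤ |sin (n * x)| * |cos x| + |cos (n * x)| * |sin x| := by
          simpa only [abs_mul] using abs_add_le (sin (n * x) * cos x) (cos (n * x) * sin x)
      _ ≤ n * |sin x| * 1 + 1 * |sin x| := by
          gcongr <;> exact abs_cos_le_one _
      _ = (n + 1 : ℕ) * |sin x| := by push_cast; ring

/-- Up to a constant factor, the sine coefficients of `θ ↦ λ(θ) ^ (-α) * sin θ`, where `λ` is the
symbol of `-Δ`; they are the values of the Riesz potential. -/
noncomputable def symbolSineCoeff (α : ℝ) (n : ℕ) : ℝ :=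
  ∫ θ in 0..π, lapSymbol θ ^ (-α) * sin θ * sin (n * θ)

theorem abs_lapSymbol_rpow_mul_sin_mul_sin_le (α : ℝ) {θ : ℝ} (hθ : θ ∈ Ioc 0 π) (n : ℕ) :
    |lapSymbol θ ^ (-α) * sin θ * sin (n * θ)| ≤ n * lapSymbol θ ^ (1 - α) := by
  have hpos := lapSymbol_pos hθ
  have hsin : |sin θ| * |sin θ| ≤ lapSymbol θ := by
    rw [← sq, sq_abs, sin_sq, lapSymbol]
    nlinarith [sq_nonneg (1 - cos θ)]
  calc |lapSymbol θ ^ (-α) * sin θ * sin (n * θ)|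
      = lapSymbol θ ^ (-α) * |sin θ| * |sin (n * θ)| := by
        rw [abs_mul, abs_mul, abs_of_nonneg (rpow_nonneg hpos.le _)]
    _ ≤ lapSymbol θ ^ (-α) * |sin θ| * (n * |sin θ|) := by
        gcongr
        exact abs_sin_nat_mul_le n θ
    _ = n * (lapSymbol θ ^ (-α) * (|sin θ| * |sin θ|)) := by ring
    _ ≤ n * (lapSymbol θ ^ (-α) * lapSymbol θ) := by gcongr
    _ = n * lapSymbol θ ^ (1 - α) := by rw [← rpow_add_one hpos.ne', neg_add_eq_sub]

theorem measurable_lapSymbol_rpow_mul_sin_mul_sin (α : ℝ) (n : ℕ) :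
    Measurable fun θ => lapSymbol θ ^ (-α) * sin θ * sin (n * θ) := by
  have := continuous_lapSymbol.measurable
  fun_prop

theorem intervalIntegrable_lapSymbol_rpow_mul_sin_mul_sin {α : ℝ} (hα : α < 3 / 2) (n : ℕ) :
    IntervalIntegrable (fun θ => lapSymbol θ ^ (-α) * sin θ * sin (n * θ)) volume 0 π := by
  refine ((intervalIntegrable_lapSymbol_rpow (s := 1 - α) (by linarith)).const_mul n).mono_fun'
    (measurable_lapSymbol_rpow_mul_sin_mul_sin α n).aestronglyMeasurable
    ((ae_restrict_iff' measurableSet_uIoc).mpr (.of_forall fun θ hθ => ?_))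
  rw [uIoc_of_le pi_nonneg] at hθ
  exact abs_lapSymbol_rpow_mul_sin_mul_sin_le α hθ n

theorem symbolSineCoeff_zero (α : ℝ) : symbolSineCoeff α 0 = 0 := by
  simp [symbolSineCoeff]

theorem symbolSineCoeff_add_two {α : ℝ} (hα : α < 3 / 2) (n : ℕ) :
    symbolSineCoeff α (n + 2) =
      2 * symbolSineCoeff α (n + 1) - symbolSineCoeff α n - symbolSineCoeff (α - 1) (n + 1) := by
  have hinteg := intervalIntegrable_lapSymbol_rpow_mul_sin_mul_sin hα
  have hinteg' := intervalIntegrable_lapSymbol_rpow_mul_sin_mul_sin (α := α - 1) (by linarith)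
  simp only [symbolSineCoeff]
  rw [← intervalIntegral.integral_const_mul, ← intervalIntegral.integral_sub
    ((hinteg _).const_mul 2) (hinteg _), ← intervalIntegral.integral_sub
    (((hinteg _).const_mul 2).sub (hinteg _)) (hinteg' _)]
  refine intervalIntegral.integral_congr_ae (.of_forall fun θ hθ => ?_)
  rw [uIoc_of_le pi_nonneg] at hθ
  have hn : (n : ℝ) * θ = (n + 1) * θ - θ := by ring
  have hn₂ : ((n + 2 : ℕ) : ℝ) * θ = (n + 1) * θ + θ := by push_cast; ring
  rw [neg_sub', sub_neg_eq_add, rpow_add_one (lapSymbol_pos hθ).ne', hn, hn₂, Nat.cast_succ,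
    sin_sub, sin_add]
  linear_combination lapSymbol θ ^ (-α) * sin θ * sin ((n + 1) * θ) * lapSymbol.eq_def θ

theorem symbolSineCoeff_one {α : ℝ} (hα : α < 3 / 2) :
    symbolSineCoeff α 1 = √π / 2 * (4 ^ (1 - α) * Gamma (3 / 2 - α)) / Gamma (3 - α) := by
  have hsplit : symbolSineCoeff α 1 =
      (∫ θ in 0..π, lapSymbol θ ^ (1 - α)) - (∫ θ in 0..π, lapSymbol θ ^ (2 - α)) / 4 := by
    rw [← intervalIntegral.integral_div, ← intervalIntegral.integral_sub
      (intervalIntegrable_lapSymbol_rpow (by linarith))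
      ((intervalIntegrable_lapSymbol_rpow (by linarith)).div_const 4)]
    refine intervalIntegral.integral_congr_ae (.of_forall fun θ hθ => ?_)
    rw [uIoc_of_le pi_nonneg] at hθ
    have hpos := (lapSymbol_pos hθ).ne'
    have hsin : sin θ ^ 2 = lapSymbol θ - lapSymbol θ ^ 2 / 4 := by
      rw [sin_sq, lapSymbol]
      ring
    rw [show 1 - α = -α + 1 by ring, show 2 - α = -α + 1 + 1 by ring, rpow_add_one hpos,
      rpow_add_one hpos, rpow_add_one hpos, Nat.cast_one, one_mul, mul_assoc, ← sq, hsin]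
    ring
  rw [hsplit, integral_lapSymbol_rpow (by linarith), integral_lapSymbol_rpow (by linarith),
    show 1 - α + 1 / 2 = 3 / 2 - α by ring, show 1 - α + 1 = 2 - α by ring,
    show 2 - α + 1 / 2 = 3 / 2 - α + 1 by ring, show 2 - α + 1 = 3 - α by ring,
    show 2 - α = 1 - α + 1 by ring, rpow_add_one four_ne_zero,
    Gamma_add_one (show 3 / 2 - α ≠ 0 by linarith),
    show 3 - α = 1 - α + 1 + 1 by ring, Gamma_add_one (show 1 - α + 1 ≠ 0 by linarith)]
  have hΓ : Gamma (1 - α + 1) ≠ 0 := (Gamma_pos_of_pos (by linarith)).ne'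
  have h2α : 1 - α + 1 ≠ 0 := by linarith
  field_simp
  ring

theorem symbolSineCoeff_two {α : ℝ} (hα : α < 3 / 2) :
    symbolSineCoeff α 2 =
      √π / 2 * (4 ^ (1 - α) * Gamma (3 / 2 - α)) * (2 * α / Gamma (4 - α)) := by
  have hΓ := (Gamma_pos_of_pos (show 0 < 3 - α by linarith)).ne'
  have h3α : 3 - α ≠ 0 := by linarith
  rw [symbolSineCoeff_add_two hα 0, symbolSineCoeff_zero, zero_add, symbolSineCoeff_one hα,
    symbolSineCoeff_one (by linarith), show 1 - (α - 1) = 1 - α + 1 by ring,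
    rpow_add_one four_ne_zero, show 3 / 2 - (α - 1) = 3 / 2 - α + 1 by ring,
    Gamma_add_one (show 3 / 2 - α ≠ 0 by linarith), show 3 - (α - 1) = 3 - α + 1 by ring,
    show 4 - α = 3 - α + 1 by ring, Gamma_add_one h3α]
  field_simp
  ring

theorem symbolSineCoeff_add_one {α : ℝ} (hα : α < 3 / 2) (n : ℕ) :
    symbolSineCoeff α (n + 1) = √π / 2 * (4 ^ (1 - α) * Gamma (3 / 2 - α)) *
      ((n + 1) * (ascPochhammer ℝ n).eval α / Gamma (n + 3 - α)) := by
  induction n using Nat.twoStepInduction generalizing α with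
  | zero =>
    rw [zero_add, symbolSineCoeff_one hα]
    simp [div_eq_mul_inv]
  | one =>
    rw [one_add_one_eq_two, symbolSineCoeff_two hα, ascPochhammer_one, Polynomial.eval_X,
      Nat.cast_one, one_add_one_eq_two, show 1 + 3 - α = 4 - α by ring]
  | more n ih₀ ih₁ =>
    have : (0 : ℝ) ≤ n := n.cast_nonneg
    have hΓ := (Gamma_pos_of_pos (show 0 < n + 3 - α by linarith)).ne'
    have h3α : n + 3 - α ≠ 0 := by linarith
    have h4α : n + 3 - α + 1 ≠ 0 := by linarith
    have hpoch : (ascPochhammer ℝ (n + 1)).eval (α - 1) =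
        (α - 1) * (ascPochhammer ℝ n).eval α := by
      simp [ascPochhammer_succ_left]
    rw [symbolSineCoeff_add_two hα, ih₀ hα, ih₁ hα, ih₁ (by linarith), hpoch,
      ascPochhammer_succ_eval (n + 1), ascPochhammer_succ_eval n,
      show 1 - (α - 1) = 1 - α + 1 by ring, rpow_add_one four_ne_zero,
      show 3 / 2 - (α - 1) = 3 / 2 - α + 1 by ring,
      Gamma_add_one (show 3 / 2 - α ≠ 0 by linarith)]
    push_cast
    rw [show (n : ℝ) + 1 + 3 - α = n + 3 - α + 1 by ring,
      show (n : ℝ) + 1 + 3 - (α - 1) = n + 3 - α + 1 + 1 by ring,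
      show (n : ℝ) + 2 + 3 - α = n + 3 - α + 1 + 1 by ring,
      Gamma_add_one h4α, Gamma_add_one h3α]
    field_simp
    ring

theorem Gamma_add_natCast {α : ℝ} (hα : 0 < α) (n : ℕ) :
    Gamma (α + n) = (ascPochhammer ℝ n).eval α * Gamma α := by
  induction n with
  | zero => simp
  | succ n ih =>
    rw [Nat.cast_succ, ← add_assoc, Gamma_add_one (by positivity), ih, ascPochhammer_succ_eval]
    ring

theorem Riesz_eq_mul_symbolSineCoeff {α : ℝ} (hα0 : 0 < α) (hα : α < 3 / 2) (n : ℕ) :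
    Riesz α n = √(2 / π) * symbolSineCoeff α n := by
  cases n with
  | zero => simp [Riesz, symbolSineCoeff_zero]
  | succ n =>
    have hΓ := (Gamma_pos_of_pos hα0).ne'
    have hconst : √(2 / π) * (√π / 2) * 4 ^ (1 - α) = 4 / (4 ^ α * √2) := by
      rw [rpow_sub four_pos, rpow_one, sqrt_div two_pos.le, div_mul_div_cancel₀ (by positivity),
        div_mul_div_comm, div_eq_div_iff (by positivity) (by positivity)]
      linear_combination 4 * 4 ^ α * sq_sqrt (two_pos (α := ℝ)).le
    rw [Riesz, symbolSineCoeff_add_one hα, ← mul_assoc, ← mul_assoc, ← mul_assoc, hconst,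
      Nat.cast_succ, show (n : ℝ) + 1 + α - 1 = α + n by ring, Gamma_add_natCast hα0,
      show (n : ℝ) + 1 - α + 2 = n + 3 - α by ring]
    field_simp

theorem hasSum_Kker_mul_symbolSineCoeff {σ α : ℝ} (hσ0 : 0 < σ) (hσ1 : σ ≤ 1)
    (hα : α < 3 / 2) (m : ℕ) :
    HasSum (fun n => Kker σ m n * symbolSineCoeff α n) (symbolSineCoeff (α - σ) m) := by
  have hmeas (n : ℕ) := measurable_lapSymbol_rpow_mul_sin_mul_sin α n
  have hbound (n : ℕ) {θ : ℝ} (hθ : θ ∈ Ioc 0 π) :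
      ‖Kker σ m n * (lapSymbol θ ^ (-α) * sin θ * sin (n * θ))‖ ≤
        |n * Kker σ m n| * lapSymbol θ ^ (1 - α) := by
    rw [norm_mul, norm_eq_abs, norm_eq_abs, abs_mul (n : ℝ), Nat.abs_cast, mul_comm (n : ℝ) |_|,
      mul_assoc |_|]
    gcongr
    exact abs_lapSymbol_rpow_mul_sin_mul_sin_le α hθ n
  have hsum := (summable_mul_Kker hσ0 hσ1 m).abs
  have hpoint {θ : ℝ} (hθ : θ ∈ Ioc 0 π) :
      HasSum (fun n : ℕ => Kker σ m n * (lapSymbol θ ^ (-α) * sin θ * sin (n * θ)))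
        (lapSymbol θ ^ (-(α - σ)) * sin θ * sin (m * θ)) := by
    have hmul := (hasSum_Kker_mul_sin hσ0 hσ1 m θ).mul_left (lapSymbol θ ^ (-α) * sin θ)
    rw [neg_sub', sub_neg_eq_add, rpow_add (lapSymbol_pos hθ), mul_right_comm (_ ^ (-α)), mul_assoc]
    exact hmul.congr_fun fun n => mul_left_comm ..
  simp only [symbolSineCoeff, ← intervalIntegral.integral_const_mul]
  refine intervalIntegral.hasSum_integral_of_dominated_convergence
    (fun n θ => |n * Kker σ m n| * lapSymbol θ ^ (1 - α))
    (fun n => ((hmeas n).const_mul _).aestronglyMeasurable)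
    (fun n => .of_forall fun θ hθ => hbound n (by rwa [uIoc_of_le pi_nonneg] at hθ))
    (.of_forall fun θ _ => hsum.mul_right _) ?_
    (.of_forall fun θ hθ => hpoint (by rwa [uIoc_of_le pi_nonneg] at hθ))
  simp only [tsum_mul_right]
  exact (intervalIntegrable_lapSymbol_rpow (by linarith)).const_mul _

theorem Riesz_zero (α : ℝ) : Riesz α 0 = 0 := by
  simp [Riesz]

theorem Riesz_pos {α : ℝ} (hα0 : 0 < α) (hα : α < 3 / 2) {n : ℕ} (hn : n ≠ 0) :
    0 < Riesz α n := by
  have hn' : (1 : ℝ) ≤ n := by exact_mod_cast Nat.one_le_iff_ne_zero.mpr hn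
  have : 0 < Gamma (3 / 2 - α) := Gamma_pos_of_pos (by linarith)
  have : 0 < Gamma (n + α - 1) := Gamma_pos_of_pos (by linarith)
  have : 0 < Gamma α := Gamma_pos_of_pos hα0
  have : 0 < Gamma (n - α + 2) := Gamma_pos_of_pos (by linarith)
  rw [Riesz]
  positivity

theorem hasSum_Kker_mul_Riesz {σ α : ℝ} (hσ0 : 0 < σ) (hσ1 : σ ≤ 1) (hσα : σ < α)
    (hα : α < 3 / 2) (m : ℕ) :
    HasSum (fun n => Kker σ m n * Riesz α n) (Riesz (α - σ) m) := by
  rw [Riesz_eq_mul_symbolSineCoeff (sub_pos.mpr hσα) (by linarith)]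
  refine ((hasSum_Kker_mul_symbolSineCoeff hσ0 hσ1 hα m).mul_left √(2 / π)).congr_fun fun n => ?_
  rw [Riesz_eq_mul_symbolSineCoeff (hσ0.trans hσα) hα, mul_left_comm]

theorem Wweight_mul_Riesz {σ α : ℝ} (hα0 : 0 < α) (hα : α < 3 / 2) {n : ℕ} (hn : n ≠ 0) :
    Wweight σ α n * Riesz α n = Riesz (α - σ) n := by
  have hn' : (1 : ℝ) ≤ n := by exact_mod_cast Nat.one_le_iff_ne_zero.mpr hn
  have h₁ := (Gamma_pos_of_pos (show 0 < 3 / 2 - α by linarith)).ne'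
  have h₂ := (Gamma_pos_of_pos (show 0 < n + α - 1 by linarith)).ne'
  have h₃ := (Gamma_pos_of_pos hα0).ne'
  have h₄ := (Gamma_pos_of_pos (show 0 < n - α + 2 by linarith)).ne'
  rw [Wweight, Riesz, Riesz, rpow_sub four_pos, show 3 / 2 - (α - σ) = 3 / 2 - α + σ by ring,
    show (n : ℝ) + (α - σ) - 1 = n + α - σ - 1 by ring,
    show (n : ℝ) - (α - σ) + 2 = n - α + σ + 2 by ring]
  generalize Gamma (3 / 2 - α) = a at h₁ ⊢
  generalize Gamma (n - α + 2) = d at h₄ ⊢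
  field_simp

end

/-! ### The Hardy inequality -/

theorem Wweight_mul_Riesz_le_sum_Kker {σ α : ℝ} (hσ0 : 0 < σ) (hσ1 : σ ≤ 1) (hσα : σ < α)
    (hα : α < 3 / 2) {s : Finset ℕ} (hs : 0 ∉ s) {m : ℕ} (hm : m ∈ s) :
    Wweight σ α m * Riesz α m ≤ ∑ n ∈ s, Kker σ m n * Riesz α n := by
  have hα0 := hσ0.trans hσα
  have hm0 : m ≠ 0 := ne_of_mem_of_not_mem hm hs
  have hnonneg (n : ℕ) (hn : n ∉ s) : 0 ≤ -(Kker σ m n * Riesz α n) := by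
    rcases eq_or_ne n 0 with rfl | hn0
    · simp [Riesz_zero]
    · exact neg_nonneg.mpr (mul_nonpos_of_nonpos_of_nonneg
        (Kker_nonpos hσ0 hσ1 (ne_of_mem_of_not_mem hm hn)) (Riesz_pos hα0 hα hn0).le)
  have hle := sum_le_hasSum s hnonneg (hasSum_Kker_mul_Riesz hσ0 hσ1 hσα hα m).neg
  rwa [Finset.sum_neg_distrib, neg_le_neg_iff, ← Wweight_mul_Riesz hα0 hα hm0] at hle

-- Ground-state representation: for `f = g * u`, the two sides differ by at least half the sum
-- over all pairs of `-K i j * u i * u j * (g i - g j) ^ 2 ≥ 0`.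
theorem sum_mul_sq_le_sum_mul_mul_of_supersolution {ι : Type*} (s : Finset ι) {K : ι → ι → ℝ}
    {u w : ι → ℝ} (hsymm : ∀ i j, K i j = K j i) (hoff : ∀ i j, i ≠ j → K i j ≤ 0)
    (hu : ∀ i ∈ s, 0 < u i) (hw : ∀ i ∈ s, w i * u i ≤ ∑ j ∈ s, K i j * u j) (f : ι → ℝ) :
    ∑ i ∈ s, w i * f i ^ 2 ≤ ∑ i ∈ s, ∑ j ∈ s, K i j * f i * f j := by
  have hground {i j : ι} (hi : i ∈ s) (hj : j ∈ s) :
      K i j * u j * f i ^ 2 / u i + K j i * u i * f j ^ 2 / u j ≤ 2 * (K i j * f i * f j) := by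
    have hui := hu i hi
    have huj := hu j hj
    rcases eq_or_ne i j with rfl | hij
    · field_simp
      linarith
    · have hK : K i j * (u i * u j) ≤ 0 :=
        mul_nonpos_of_nonpos_of_nonneg (hoff i j hij) (by positivity)
      have hsq : K i j * (u i * u j) * (f i / u i - f j / u j) ^ 2 ≤ 0 :=
        mul_nonpos_of_nonpos_of_nonneg hK (sq_nonneg _)
      rw [hsymm j i, ← sub_nonpos]
      refine le_of_eq_of_le ?_ hsq
      field_simp
      ring
  have hrow : ∑ i ∈ s, w i * f i ^ 2 ≤ ∑ i ∈ s, ∑ j ∈ s, K i j * u j * f i ^ 2 / u i := by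
    refine Finset.sum_le_sum fun i hi => ?_
    rw [← Finset.sum_div, ← Finset.sum_mul, le_div_iff₀ (hu i hi), mul_right_comm]
    exact mul_le_mul_of_nonneg_right (hw i hi) (sq_nonneg _)
  have hdouble : 2 * ∑ i ∈ s, ∑ j ∈ s, K i j * u j * f i ^ 2 / u i ≤
      2 * ∑ i ∈ s, ∑ j ∈ s, K i j * f i * f j := by
    rw [two_mul]
    nth_rw 2 [Finset.sum_comm]
    simp only [Finset.mul_sum, ← Finset.sum_add_distrib]
    exact Finset.sum_le_sum fun i hi => Finset.sum_le_sum fun j hj => hground hi hj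
  linarith

theorem Qform_eq_sum {f : ℕ → ℝ} {s : Finset ℕ} (σ : ℝ) (hs : Function.support f ⊆ s) :
    Qform σ f = ∑ m ∈ s, ∑ n ∈ s, Kker σ m n * f m * f n := by
  have hzero {n : ℕ} (hn : n ∉ s) : f n = 0 := Function.notMem_support.mp fun h => hn (hs h)
  rw [Qform, tsum_eq_sum fun m hm => by simp [hzero hm]]
  exact Finset.sum_congr rfl fun m _ => tsum_eq_sum fun n hn => by simp [hzero hn]

theorem stmt_2_general {σ α : ℝ} (hσ0 : 0 < σ) (hσ1 : σ ≤ 1) (hσα : σ < α) (hα : α < 3 / 2)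
    {f : ℕ → ℝ} (hf0 : f 0 = 0) (hf : (Function.support f).Finite) :
    ∑' n : ℕ, Wweight σ α n * f n ^ 2 ≤ Qform σ f := by
  have hs0 : 0 ∉ hf.toFinset := by simpa using hf0
  have hzero (n : ℕ) (hn : n ∉ hf.toFinset) : f n = 0 := by simpa using hn
  rw [Qform_eq_sum σ hf.coe_toFinset.superset,
    tsum_eq_sum fun n hn => by rw [hzero n hn, zero_pow two_ne_zero, mul_zero]]
  exact sum_mul_sq_le_sum_mul_mul_of_supersolution hf.toFinset (Kker_comm σ)
    (fun _ _ => Kker_nonpos hσ0 hσ1)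
    (fun n hn => Riesz_pos (hσ0.trans hσα) hα (ne_of_mem_of_not_mem hn hs0))
    (fun n hn => Wweight_mul_Riesz_le_sum_Kker hσ0 hσ1 hσα hα hs0 hn) f

/-- The Hardy inequality with weight `W_{α,σ}` for `(-Δ_ℕ)^σ`. -/
theorem stmt_2 (σ α : ℝ) (hσ0 : 0 < σ) (hσ1 : σ ≤ 1)
    (hα0 : 0 < α) (hα3 : α < 3/2) (hα1 : σ < α) (hα2 : α < 1 + σ)
    (f : ℕ → ℝ) (hf0 : f 0 = 0) (hf : (Function.support f).Finite) :
    (∑' n : ℕ, Wweight σ α n * (f n) ^ 2) ≤ Qform σ f :=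
  stmt_2_general hσ0 hσ1 hα1 hα3 hf0 hf
end
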